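/- There exists an absolute constant c ≥ 1 (independent of the dimension and of the bodies) such that for every dimension d ≥ 2, every pair of centered convex bodies C, D ⊆ ℝ^d (i.e., each has centroid at the origin) and every α > 0, one has c^{−d} · N∂_{C°}(D°, α) ≤ N∂_D(C, α) ≤ c^{d} · N∂_{C°}(D°, α), where N∂_D(C,α) denotes the least number of translates of α·D needed to cover the frontier ∂C, and N∂_{C°}(D°,α) the least number of translates of α·C° needed to cover ∂D°. -/

import Mathlib

open Set MeasureTheory Metric
open scoped Pointwise RealInnerProductSpace ENNReal

noncomputable section

abbrev Euc (d : ℕ) := EuclideanSpace ℝ (Fin d)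

/-- A convex body: a compact convex set with nonempty interior. -/
def IsConvexBody {d : ℕ} (K : Set (Euc d)) : Prop :=
  IsCompact K ∧ Convex ℝ K ∧ (interior K).Nonempty

/-- The polar of a set. -/
def polarSet {d : ℕ} (S : Set (Euc d)) : Set (Euc d) :=
  {y | ∀ x ∈ S, ⟪x, y⟫ ≤ 1}

/-- The Hilbert distance with respect to the body `K`. -/
def hilbertDist {d : ℕ} (K : Set (Euc d)) (x y : Euc d) : ℝ :=
  -(1 / 2) * Real.log ((1 - gauge ((fun k => k - x) '' K) (y - x)) *
    (1 - gauge ((fun k => k - y) '' K) (x - y)))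

/-- The Hilbert ball of radius `r` centered at `x`. -/
def hilbertBall {d : ℕ} (K : Set (Euc d)) (x : Euc d) (r : ℝ) : Set (Euc d) :=
  {y ∈ interior K | hilbertDist K x y ≤ r}

/-- The Hilbert covering number of `U` at scale `α` in the geometry induced by `K`. -/
def hilbertCov {d : ℕ} (K U : Set (Euc d)) (α : ℝ) : ℕ :=
  sInf {m : ℕ | ∃ x : Fin m → Euc d, (∀ i, x i ∈ interior K) ∧
    U ⊆ ⋃ i, hilbertBall K (x i) α}

/-- The translative covering number of `U` by translates of `α • D`. -/
def transCov {d : ℕ} (D U : Set (Euc d)) (α : ℝ) : ℕ :=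
  sInf {m : ℕ | ∃ x : Fin m → Euc d, U ⊆ ⋃ i, x i +ᵥ α • D}

/-- The Hilbert `α`-expansion of `G` in `K`. -/
def hilbertExpand {d : ℕ} (K G : Set (Euc d)) (α : ℝ) : Set (Euc d) :=
  {x ∈ interior K | sInf (hilbertDist K x '' G) ≤ α}

/-- The Lebesgue volume of the Euclidean unit ball in `ℝ^d`. -/
def ωd (d : ℕ) : ℝ := (volume (ball (0 : Euc d) 1)).toReal

/-- The Hilbert Finsler unit ball at `y` in the geometry induced by `K`. -/
def finslerBall {d : ℕ} (K : Set (Euc d)) (y : Euc d) : Set (Euc d) :=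
  {v | gauge ((fun k => k - y) '' K) v + gauge ((fun k => k - y) '' K) (-v) ≤ 2}

/-- The Hilbert Holmes–Thompson volume of `U` in the geometry induced by `K`. -/
def volH {d : ℕ} (K U : Set (Euc d)) : ℝ :=
  (1 / ωd d) * ∫ y in U, (volume (polarSet (finslerBall K y))).toReal

/-- The recentered Macbeath region `A(x) := (K ∩ (2x − K)) − x`. -/
def macbeathA {d : ℕ} (K : Set (Euc d)) (x : Euc d) : Set (Euc d) :=
  (fun k => k - x) '' (K ∩ ((fun k => (2 : ℝ) • x - k) '' K))


/-! ### Exponentially tilted moments over a compact set -/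

/-- Unnormalised tilted moment. -/
def tI {d : ℕ} (K : Set (Euc d)) (g : Euc d → ℝ) (y : Euc d) : ℝ :=
  ∫ x in K, g x * Real.exp ⟪x, y⟫

/-- Normalised tilted moment. -/
def mom {d : ℕ} (K : Set (Euc d)) (g : Euc d → ℝ) (y : Euc d) : ℝ :=
  tI K g y / tI K (fun _ => 1) y

lemma tI_integrable {d : ℕ} {K : Set (Euc d)} (hK : IsCompact K) {g : Euc d → ℝ}
    (hg : Continuous g) (y : Euc d) :
    IntegrableOn (fun x => g x * Real.exp ⟪x, y⟫) K :=
  (by fun_prop : Continuous fun x : Euc d => g x * Real.exp ⟪x, y⟫).continuousOn.integrableOn_compact hK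

lemma tI_hasFDerivAt {d : ℕ} {K : Set (Euc d)} (hK : IsCompact K) {g : Euc d → ℝ}
    (hg : Continuous g) (y : Euc d) :
    ∃ L : Euc d →L[ℝ] ℝ, HasFDerivAt (tI K g) L y ∧
      ∀ v, L v = tI K (fun x => g x * ⟪x, v⟫) y := by
  have hcont : ∀ y : Euc d, Continuous fun x : Euc d => (g x * Real.exp ⟪x, y⟫) • (innerSL ℝ x) := by
    intro y
    exact (by fun_prop : Continuous fun x : Euc d => g x * Real.exp ⟪x, y⟫).smul
      (innerSL ℝ).continuous
  obtain ⟨R, hR⟩ := hK.isBounded.exists_norm_le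
  obtain ⟨G, hG⟩ := hK.exists_bound_of_continuousOn hg.continuousOn
  have h := hasFDerivAt_integral_of_dominated_of_fderiv_le (𝕜 := ℝ)
    (μ := volume.restrict K) (F := fun y x => g x * Real.exp ⟪x, y⟫)
    (F' := fun y x => (g x * Real.exp ⟪x, y⟫) • (innerSL ℝ x)) (x₀ := y)
    (s := ball y 1) (bound := fun _ => |G| * Real.exp (|R| * (‖y‖ + 1)) * |R|)
    (ball_mem_nhds y one_pos) ?_ ?_ ?_ ?_ ?_ ?_
  · refine ⟨_, h, fun v => ?_⟩
    rw [ContinuousLinearMap.integral_apply]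
    · unfold tI
      congr 1
      ext x
      simp
      ring
    · exact (hcont y).continuousOn.integrableOn_compact hK
  · filter_upwards with y'
    exact (tI_integrable hK hg y').aestronglyMeasurable
  · exact tI_integrable hK hg y
  · exact ((hcont y).continuousOn.integrableOn_compact hK).aestronglyMeasurable
  · refine (ae_restrict_iff' hK.measurableSet).2 (Filter.Eventually.of_forall ?_)
    intro x hx y' hy'
    have h1 : ‖x‖ ≤ |R| := (hR x hx).trans (le_abs_self R)
    have h2 : ‖y'‖ ≤ ‖y‖ + 1 := by
      have h3 : dist y' y < 1 := hy'
      have h4 := norm_le_norm_add_norm_sub y y'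
      rw [dist_eq_norm] at h3
      rw [norm_sub_rev] at h3
      linarith
    have h5 : ⟪x, y'⟫ ≤ |R| * (‖y‖ + 1) :=
      (real_inner_le_norm x y').trans (mul_le_mul h1 h2 (norm_nonneg _) (abs_nonneg _))
    rw [norm_smul, norm_mul, innerSL_apply_norm, Real.norm_of_nonneg (Real.exp_pos _).le]
    have h6 : ‖g x‖ ≤ |G| := (hG x hx).trans (le_abs_self G)
    gcongr
  · exact integrable_const_iff.2 (Or.inr (by
      rw [isFiniteMeasure_restrict]; exact hK.measure_lt_top.ne))
  · refine Filter.Eventually.of_forall ?_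
    intro x y' _
    have h1 : HasFDerivAt (fun y' : Euc d => ⟪x, y'⟫) (innerSL ℝ x) y' :=
      (innerSL ℝ x).hasFDerivAt
    have h2 := (h1.exp).const_mul (g x)
    refine h2.congr_fderiv ?_
    ext v
    simp [mul_assoc]

lemma tI_one_pos {d : ℕ} {K : Set (Euc d)} (hK : IsConvexBody K) (y : Euc d) :
    0 < tI K (fun _ => 1) y := by
  unfold tI
  rw [setIntegral_pos_iff_support_of_nonneg_ae]
  · have : (Function.support fun x : Euc d => (1 : ℝ) * Real.exp ⟪x, y⟫) = univ := by
      ext x; simp [Real.exp_ne_zero]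
    rw [this, univ_inter]
    exact (isOpen_interior.measure_pos volume hK.2.2).trans_le (measure_mono interior_subset)
  · exact Filter.Eventually.of_forall fun x => by simpa using (Real.exp_pos _).le
  · exact tI_integrable hK.1 continuous_const y

lemma mom_hasFDerivAt {d : ℕ} {K : Set (Euc d)} (hK : IsConvexBody K) {g : Euc d → ℝ}
    (hg : Continuous g) (y : Euc d) :
    ∃ L : Euc d →L[ℝ] ℝ, HasFDerivAt (mom K g) L y ∧
      ∀ v, L v = mom K (fun x => g x * ⟪x, v⟫) y - mom K g y * mom K (fun x => ⟪x, v⟫) y := by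
  obtain ⟨L1, h1, h1'⟩ := tI_hasFDerivAt hK.1 hg y
  obtain ⟨L2, h2, h2'⟩ := tI_hasFDerivAt hK.1 (continuous_const (y := (1 : ℝ))) y
  have hZ := (tI_one_pos hK y).ne'
  have h3 := (hasDerivAt_inv hZ).comp_hasFDerivAt y h2
  refine ⟨_, h1.mul h3, fun v => ?_⟩
  simp only [one_mul] at h2'
  simp [h1', h2', mom]
  field_simp
  ring

lemma mom_add {d : ℕ} {K : Set (Euc d)} (hK : IsCompact K) {g h : Euc d → ℝ}
    (hg : Continuous g) (hh : Continuous h) (y : Euc d) :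
    mom K (fun x => g x + h x) y = mom K g y + mom K h y := by
  unfold mom
  rw [← add_div]
  congr 1
  unfold tI
  rw [← integral_add (tI_integrable hK hg y) (tI_integrable hK hh y)]
  congr 1; ext x; ring

lemma mom_const_mul {d : ℕ} {K : Set (Euc d)} (c : ℝ) (g : Euc d → ℝ) (y : Euc d) :
    mom K (fun x => c * g x) y = c * mom K g y := by
  unfold mom
  rw [← mul_div_assoc]
  congr 1
  unfold tI
  rw [← integral_const_mul]
  congr 1; ext x; ring

lemma mom_one {d : ℕ} {K : Set (Euc d)} (hK : IsConvexBody K) (y : Euc d) :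
    mom K (fun _ => 1) y = 1 := div_self (tI_one_pos hK y).ne'

lemma mom_const {d : ℕ} {K : Set (Euc d)} (hK : IsConvexBody K) (c : ℝ) (y : Euc d) :
    mom K (fun _ => c) y = c := by
  have := mom_const_mul (K := K) c (fun _ => 1) y
  rw [mom_one hK] at this
  simpa using this

lemma mom_sum {d : ℕ} {K : Set (Euc d)} (hK : IsConvexBody K) {ι : Type*} (s : Finset ι)
    {g : ι → Euc d → ℝ} (hg : ∀ i, Continuous (g i)) (y : Euc d) :
    mom K (fun x => ∑ i ∈ s, g i x) y = ∑ i ∈ s, mom K (g i) y := by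
  classical
  induction s using Finset.induction_on with
  | empty => simpa using mom_const hK 0 y
  | insert a s ha ih =>
    simp only [Finset.sum_insert ha]
    rw [mom_add hK.1 (hg a) (continuous_finsetSum _ fun i _ => hg i), ih]

lemma mom_mono {d : ℕ} {K : Set (Euc d)} (hK : IsConvexBody K) {g h : Euc d → ℝ}
    (hg : Continuous g) (hh : Continuous h) (hgh : ∀ x ∈ K, g x ≤ h x) (y : Euc d) :
    mom K g y ≤ mom K h y := by
  unfold mom
  refine div_le_div_of_nonneg_right ?_ (tI_one_pos hK y).le
  refine setIntegral_mono_on (tI_integrable hK.1 hg y) (tI_integrable hK.1 hh y)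
    hK.1.measurableSet fun x hx => ?_
  exact mul_le_mul_of_nonneg_right (hgh x hx) (Real.exp_pos _).le

lemma mom_bound {d : ℕ} {K : Set (Euc d)} (hK : IsConvexBody K) {g : Euc d → ℝ}
    (hg : Continuous g) : ∃ B : ℝ, 0 ≤ B ∧ ∀ y, |mom K g y| ≤ B := by
  obtain ⟨G, hG⟩ := hK.1.exists_bound_of_continuousOn hg.continuousOn
  refine ⟨|G|, abs_nonneg _, fun y => abs_le.2 ⟨?_, ?_⟩⟩
  · rw [← mom_const hK (-|G|) y]
    refine mom_mono hK continuous_const hg (fun x hx => ?_) y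
    have := (abs_le.1 (hG x hx)).1
    linarith [le_abs_self G]
  · rw [← mom_const hK (|G|) y]
    refine mom_mono hK hg continuous_const (fun x hx => ?_) y
    have := (abs_le.1 (hG x hx)).2
    linarith [le_abs_self G]

lemma mom_continuous {d : ℕ} {K : Set (Euc d)} (hK : IsConvexBody K) {g : Euc d → ℝ}
    (hg : Continuous g) : Continuous (mom K g) := by
  refine continuous_iff_continuousAt.2 fun y => ?_
  obtain ⟨L, hL, _⟩ := mom_hasFDerivAt hK hg y
  exact hL.continuousAt

/-- tilted mean, coordinates -/
def tb {d : ℕ} (K : Set (Euc d)) (k : Fin d) (y : Euc d) : ℝ := mom K (fun x => x k) y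

/-- tilted mean -/
def tbv {d : ℕ} (K : Set (Euc d)) (y : Euc d) : Euc d := WithLp.toLp 2 (fun k => tb K k y)

/-- tilted covariance matrix -/
def tH {d : ℕ} (K : Set (Euc d)) (y : Euc d) : Matrix (Fin d) (Fin d) ℝ :=
  fun k j => mom K (fun x => x k * x j) y - tb K k y * tb K j y

/-- third cumulants -/
def tT {d : ℕ} (K : Set (Euc d)) (y : Euc d) (k j l : Fin d) : ℝ :=
  mom K (fun x => x k * x j * x l) y - mom K (fun x => x k * x j) y * tb K l y
    - (tH K y k l * tb K j y + tb K k y * tH K y j l)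

lemma inner_eq_sum {d : ℕ} (x v : Euc d) : ⟪x, v⟫ = ∑ i, x i * v i := by
  simp [PiLp.inner_apply, mul_comm]

lemma tb_hasFDerivAt {d : ℕ} {K : Set (Euc d)} (hK : IsConvexBody K) (k : Fin d) (y : Euc d) :
    ∃ L : Euc d →L[ℝ] ℝ, HasFDerivAt (tb K k) L y ∧ ∀ v, L v = ∑ j, tH K y k j * v j := by
  obtain ⟨L, hL, h⟩ := mom_hasFDerivAt hK (g := fun x => x k) (by fun_prop) y
  refine ⟨L, hL, fun v => ?_⟩
  rw [h]
  have e1 : (fun x : Euc d => x k * ⟪x, v⟫) = fun x => ∑ j, v j * (x k * x j) := by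
    ext x; rw [inner_eq_sum, Finset.mul_sum]; congr 1; ext j; ring
  have e2 : (fun x : Euc d => ⟪x, v⟫) = fun x => ∑ j, v j * x j := by
    ext x; rw [inner_eq_sum]; congr 1; ext j; ring
  rw [e1, e2, mom_sum hK _ (fun i => by fun_prop), mom_sum hK _ (fun i => by fun_prop),
    Finset.mul_sum, ← Finset.sum_sub_distrib]
  congr 1; ext j
  rw [mom_const_mul, mom_const_mul]
  simp only [tH, tb]; ring

lemma tH_hasFDerivAt {d : ℕ} {K : Set (Euc d)} (hK : IsConvexBody K) (k j : Fin d) (y : Euc d) :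
    ∃ L : Euc d →L[ℝ] ℝ, HasFDerivAt (fun y => tH K y k j) L y ∧
      ∀ v, L v = ∑ l, tT K y k j l * v l := by
  obtain ⟨L, hL, h⟩ := mom_hasFDerivAt hK (g := fun x => x k * x j) (by fun_prop) y
  obtain ⟨L1, hL1, h1⟩ := tb_hasFDerivAt hK k y
  obtain ⟨L2, hL2, h2⟩ := tb_hasFDerivAt hK j y
  refine ⟨_, hL.sub (hL1.mul hL2), fun v => ?_⟩
  have e1 : (fun x : Euc d => x k * x j * ⟪x, v⟫) = fun x => ∑ l, v l * (x k * x j * x l) := by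
    ext x; rw [inner_eq_sum, Finset.mul_sum]; congr 1; ext j; ring
  have e2 : (fun x : Euc d => ⟪x, v⟫) = fun x => ∑ j, v j * x j := by
    ext x; rw [inner_eq_sum]; congr 1; ext j; ring
  simp only [sub_apply, add_apply, smul_apply,
    smul_eq_mul, h, h1, h2]
  rw [e1, e2, mom_sum hK _ (fun i => by fun_prop), mom_sum hK _ (fun i => by fun_prop),
    Finset.mul_sum, Finset.mul_sum, Finset.mul_sum, ← Finset.sum_sub_distrib,
    ← Finset.sum_add_distrib, ← Finset.sum_sub_distrib]
  congr 1; ext l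
  rw [mom_const_mul, mom_const_mul]
  simp only [tT, tb]; ring

lemma tH_symm {d : ℕ} {K : Set (Euc d)} (y : Euc d) (k j : Fin d) : tH K y k j = tH K y j k := by
  simp only [tH]
  rw [mul_comm (tb K k y)]
  congr 2; ext x; ring

lemma tT_symm {d : ℕ} {K : Set (Euc d)} (y : Euc d) (k j l : Fin d) :
    tT K y k j l = tT K y k l j := by
  have e1 : (fun x : Euc d => x k * x j * x l) = fun x => x k * x l * x j := by ext x; ring
  simp only [tT, e1]
  rw [tH_symm y j l]
  simp only [tH]
  ring

lemma tT_symm' {d : ℕ} {K : Set (Euc d)} (y : Euc d) (k j l : Fin d) :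
    tT K y k j l = tT K y j k l := by
  have e1 : (fun x : Euc d => x k * x j * x l) = fun x => x j * x k * x l := by ext x; ring
  have e2 : (fun x : Euc d => x k * x j) = fun x => x j * x k := by ext x; ring
  simp only [tT, e1, e2]
  ring

lemma tbv_hasFDerivAt {d : ℕ} {K : Set (Euc d)} (hK : IsConvexBody K) (y : Euc d) :
    HasFDerivAt (tbv K) (Matrix.toEuclideanCLM (𝕜 := ℝ) (tH K y)) y := by
  rw [← hasFDerivWithinAt_univ, hasFDerivWithinAt_euclidean]
  intro k
  obtain ⟨L, hL, h⟩ := tb_hasFDerivAt hK k y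
  rw [hasFDerivWithinAt_univ]
  refine hL.congr_fderiv ?_
  ext v
  rw [h]
  simp [Matrix.ofLp_toEuclideanCLM, Matrix.mulVec, dotProduct]

lemma exists_sep {d : ℕ} {K : Set (Euc d)} (hc : Convex ℝ K) (hcl : IsClosed K) {b : Euc d}
    (hb : b ∉ K) : ∃ (u : Euc d) (c : ℝ), (∀ x ∈ K, ⟪x, u⟫ < c) ∧ c < ⟪b, u⟫ := by
  obtain ⟨f, c, h1, h2⟩ := geometric_hahn_banach_closed_point hc hcl hb
  have h : ∀ x, ⟪x, (InnerProductSpace.toDual ℝ (Euc d)).symm f⟫ = f x := by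
    intro x
    rw [real_inner_comm, InnerProductSpace.toDual_symm_apply]
  exact ⟨(InnerProductSpace.toDual ℝ (Euc d)).symm f, c, fun x hx => by rw [h]; exact h1 x hx,
    by rw [h]; exact h2⟩

lemma det_toECLM {d : ℕ} (A : Matrix (Fin d) (Fin d) ℝ) :
    (Matrix.toEuclideanCLM (𝕜 := ℝ) A).det = A.det := by
  simp [ContinuousLinearMap.det, Matrix.coe_toEuclideanCLM_eq_toEuclideanLin,
    Matrix.toLpLin_eq_toLin]

lemma inner_tbv {d : ℕ} {K : Set (Euc d)} (hK : IsConvexBody K) (y v : Euc d) :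
    ⟪tbv K y, v⟫ = mom K (fun x => ⟪x, v⟫) y := by
  have e2 : (fun x : Euc d => ⟪x, v⟫) = fun x => ∑ j, v j * x j := by
    ext x; rw [inner_eq_sum]; congr 1; ext j; ring
  rw [e2, mom_sum hK _ (fun i => by fun_prop), inner_eq_sum]
  congr 1; ext j
  rw [mom_const_mul]
  simp only [tbv, tb]; ring

lemma tbv_mem {d : ℕ} {K : Set (Euc d)} (hK : IsConvexBody K) (y : Euc d) : tbv K y ∈ K := by
  by_contra hb
  obtain ⟨u, c, h1, h2⟩ := exists_sep hK.2.1 hK.1.isClosed hb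
  rw [inner_tbv hK] at h2
  have := mom_mono hK (g := fun x => ⟪x, u⟫) (h := fun _ => c) (by fun_prop) continuous_const
    (fun x hx => (h1 x hx).le) y
  rw [mom_const hK] at this
  linarith

lemma tH_quad {d : ℕ} {K : Set (Euc d)} (hK : IsConvexBody K) (y v : Euc d) :
    ∑ k, ∑ j, v k * tH K y k j * v j = mom K (fun x => (⟪x, v⟫ - ⟪tbv K y, v⟫) ^ 2) y := by
  have e1 : (fun x : Euc d => (⟪x, v⟫ - ⟪tbv K y, v⟫) ^ 2) =
      fun x => (∑ k, ∑ j, (v k * v j) * (x k * x j)) +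
        ((-2 * ⟪tbv K y, v⟫) * ⟪x, v⟫ + ⟪tbv K y, v⟫ ^ 2) := by
    ext x
    have : ⟪x, v⟫ ^ 2 = ∑ k, ∑ j, (v k * v j) * (x k * x j) := by
      rw [inner_eq_sum, sq, Finset.sum_mul_sum]
      congr 1; ext k; congr 1; ext j; ring
    rw [← this]; ring
  have e3 : ⟪tbv K y, v⟫ ^ 2 = ∑ k, ∑ j, (v k * v j) * (tb K k y * tb K j y) := by
    rw [inner_eq_sum, sq, Finset.sum_mul_sum]
    congr 1; ext k; congr 1; ext j; simp only [tbv]; ring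
  rw [e1, mom_add hK.1 (by fun_prop) (by fun_prop), mom_add hK.1 (by fun_prop) (by fun_prop),
    mom_const hK, mom_const_mul, ← inner_tbv hK, mom_sum hK _ (fun i => by fun_prop)]
  have e4 : ∀ k, mom K (fun x : Euc d => ∑ j, (v k * v j) * (x k * x j)) y =
      ∑ j, (v k * v j) * mom K (fun x => x k * x j) y := by
    intro k
    rw [mom_sum hK _ (fun i => by fun_prop)]
    congr 1; ext j; rw [mom_const_mul]
  simp only [e4]
  have e5 : ∑ k, ∑ j, v k * tH K y k j * v j =
    (∑ k, ∑ j, (v k * v j) * mom K (fun x => x k * x j) y) - ⟪tbv K y, v⟫ ^ 2 := by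
    rw [e3, ← Finset.sum_sub_distrib]
    congr 1; ext k
    rw [← Finset.sum_sub_distrib]
    congr 1; ext j
    simp only [tH]; ring
  rw [e5]; ring

lemma hyperplane_null {d : ℕ} {v : Euc d} (hv : v ≠ 0) (c : ℝ) :
    volume {x : Euc d | ⟪x, v⟫ = c} = 0 := by
  have hi : ⟪v, v⟫ ≠ (0 : ℝ) := by rwa [ne_eq, inner_self_eq_zero]
  let s : AffineSubspace ℝ (Euc d) :=
    { carrier := {x : Euc d | ⟪x, v⟫ = c}
      smul_vsub_vadd_mem' := by
        intro t p1 p2 p3 h1 h2 h3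
        simp only [mem_setOf_eq] at *
        simp [inner_add_left, inner_smul_left, inner_sub_left, h1, h2, h3] }
  have hs : s ≠ ⊤ := by
    intro h
    have h1 : ((c + 1) / ⟪v, v⟫) • v ∈ s := by rw [h]; trivial
    have h2 : ⟪((c + 1) / ⟪v, v⟫) • v, v⟫ = c := h1
    rw [inner_smul_left] at h2
    simp only [conj_trivial] at h2
    rw [div_mul_cancel₀ _ hi] at h2
    linarith
  exact Measure.addHaar_affineSubspace volume s hs

lemma tH_quad_pos {d : ℕ} {K : Set (Euc d)} (hK : IsConvexBody K) (y : Euc d) {v : Euc d}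
    (hv : v ≠ 0) : 0 < ∑ k, ∑ j, v k * tH K y k j * v j := by
  rw [tH_quad hK]
  refine div_pos ?_ (tI_one_pos hK y)
  unfold tI
  rw [setIntegral_pos_iff_support_of_nonneg_ae]
  · have hsub : interior K \ {x : Euc d | ⟪x, v⟫ = ⟪tbv K y, v⟫} ⊆
      (Function.support fun x : Euc d => (⟪x, v⟫ - ⟪tbv K y, v⟫) ^ 2 * Real.exp ⟪x, y⟫) ∩ K := by
      intro x hx
      refine ⟨?_, interior_subset hx.1⟩
      have : ⟪x, v⟫ - ⟪tbv K y, v⟫ ≠ 0 := sub_ne_zero.2 hx.2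
      simp [this, Real.exp_ne_zero]
    refine lt_of_lt_of_le ?_ (measure_mono hsub)
    rw [measure_sdiff_null (hyperplane_null hv _)]
    exact isOpen_interior.measure_pos volume hK.2.2
  · exact Filter.Eventually.of_forall fun x => by
      have := (Real.exp_pos ⟪x, y⟫).le
      simp only [Pi.zero_apply]; positivity
  · exact tI_integrable hK.1 (by fun_prop) y

lemma tH_posDef {d : ℕ} {K : Set (Euc d)} (hK : IsConvexBody K) (y : Euc d) :
    (tH K y).PosDef := by
  refine Matrix.PosDef.of_dotProduct_mulVec_pos ?_ ?_
  · ext i j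
    simp [tH_symm y i j]
  · intro v hv
    have h := tH_quad_pos hK y (v := WithLp.toLp 2 v) (by simpa using hv)
    simpa [dotProduct, Matrix.mulVec, Finset.mul_sum, mul_assoc] using h

lemma tbv_mono {d : ℕ} {K : Set (Euc d)} (hK : IsConvexBody K) {x1 x2 : Euc d} (h : x1 ≠ x2) :
    0 < ⟪tbv K x1 - tbv K x2, x1 - x2⟫ := by
  set u := x1 - x2 with hu
  have hu0 : u ≠ 0 := sub_ne_zero.2 h
  have hder : ∀ t : ℝ, HasDerivAt (fun t : ℝ => ⟪tbv K (x2 + t • u), u⟫)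
      (∑ k, ∑ j, u k * tH K (x2 + t • u) k j * u j) t := by
    intro t
    have h1 : HasDerivAt (fun t : ℝ => x2 + t • u) u t := by
      simpa using ((hasDerivAt_id t).smul_const u).const_add x2
    have h2 := (tbv_hasFDerivAt hK (x2 + t • u)).comp_hasDerivAt t h1
    have h3 := h2.inner ℝ (hasDerivAt_const t u)
    refine h3.congr_deriv ?_
    simp [inner_eq_sum, Matrix.ofLp_toEuclideanCLM, Matrix.mulVec, dotProduct, Finset.sum_mul]
    congr 1; ext k; congr 1; ext j; ring
  have hm : StrictMono (fun t : ℝ => ⟪tbv K (x2 + t • u), u⟫) :=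
    strictMono_of_deriv_pos fun t => by rw [(hder t).deriv]; exact tH_quad_pos hK _ hu0
  have := hm (zero_lt_one)
  simp only [zero_smul, add_zero, one_smul] at this
  rw [hu, add_sub_cancel] at this
  rw [inner_sub_left]
  linarith

lemma exp_jensen {d : ℕ} {K : Set (Euc d)} (hK : IsConvexBody K) {g : Euc d → ℝ}
    (hg : Continuous g) (y : Euc d) :
    Real.exp (mom K g y) ≤ mom K (fun x => Real.exp (g x)) y := by
  set a := mom K g y with ha
  have h1 : mom K (fun x => Real.exp a * (g x + (1 - a))) y = Real.exp a := by
    rw [mom_const_mul, mom_add hK.1 hg continuous_const, mom_const hK, ← ha]; ring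
  rw [← h1]
  refine mom_mono hK (by fun_prop) (by fun_prop) (fun x _ => ?_) y
  have h2 := Real.add_one_le_exp (g x - a)
  have h3 : Real.exp (g x) = Real.exp a * Real.exp (g x - a) := by
    rw [← Real.exp_add]; congr 1; ring
  rw [h3]
  exact mul_le_mul_of_nonneg_left (by linarith) (Real.exp_pos a).le

lemma integral_comp_linear {d : ℕ} (T : Matrix (Fin d) (Fin d) ℝ) (hT : T.det ≠ 0) (b : Euc d)
    (f : Euc d → ℝ) (hf : Integrable f) :
    Integrable (fun x => f (Matrix.toEuclideanCLM (𝕜 := ℝ) T (x - b))) ∧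
    ∫ x, f (Matrix.toEuclideanCLM (𝕜 := ℝ) T (x - b)) = |T.det|⁻¹ * ∫ x, f x := by
  have hd : LinearMap.det ((Matrix.toEuclideanCLM (𝕜 := ℝ) T : Euc d →L[ℝ] Euc d) :
      Euc d →ₗ[ℝ] Euc d) = T.det := det_toECLM T
  have hmap := Measure.map_linearMap_addHaar_eq_smul_addHaar (volume : Measure (Euc d))
    (f := ((Matrix.toEuclideanCLM (𝕜 := ℝ) T : Euc d →L[ℝ] Euc d) : Euc d →ₗ[ℝ] Euc d))
    (by rw [hd]; exact hT)
  rw [hd] at hmap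
  have hmeas : AEMeasurable (fun x => Matrix.toEuclideanCLM (𝕜 := ℝ) T x)
    (volume : Measure (Euc d)) := (Matrix.toEuclideanCLM (𝕜 := ℝ) T).continuous.aemeasurable
  have hmap' : Measure.map (fun x => Matrix.toEuclideanCLM (𝕜 := ℝ) T x)
    (volume : Measure (Euc d)) = ENNReal.ofReal |(T.det)⁻¹| • volume := hmap
  have hi : Integrable f (Measure.map (fun x => Matrix.toEuclideanCLM (𝕜 := ℝ) T x)
    (volume : Measure (Euc d))) := by
    rw [hmap']; exact hf.smul_measure ENNReal.ofReal_ne_top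
  constructor
  · exact (hi.comp_aemeasurable hmeas).comp_sub_right b
  · rw [integral_sub_right_eq_self (fun x => f (Matrix.toEuclideanCLM (𝕜 := ℝ) T x)) b,
      ← integral_map hmeas hi.aestronglyMeasurable, hmap', integral_smul_measure,
      ENNReal.toReal_ofReal (abs_nonneg _), abs_inv, smul_eq_mul]

open scoped MatrixOrder in
lemma exists_whitening {d : ℕ} {H : Matrix (Fin d) (Fin d) ℝ} (hH : H.PosDef) :
    ∃ T : Matrix (Fin d) (Fin d) ℝ, T * H * T.transpose = 1 := by
  have h1 := CFC.sqrt_mul_sqrt_self H hH.posSemidef.nonneg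
  have h2 : (CFC.sqrt H).PosSemidef := Matrix.nonneg_iff_posSemidef.1 (CFC.sqrt_nonneg H)
  have hu : IsUnit (CFC.sqrt H) := by
    have := hH.isUnit
    rw [← h1] at this
    exact isUnit_of_mul_isUnit_left this
  have hs : (CFC.sqrt H).transpose = CFC.sqrt H := by
    have := h2.isHermitian
    rwa [Matrix.IsHermitian, Matrix.conjTranspose_eq_transpose_of_trivial] at this
  have hd : IsUnit (CFC.sqrt H).det := (Matrix.isUnit_iff_isUnit_det _).1 hu
  refine ⟨(CFC.sqrt H)⁻¹, ?_⟩
  rw [Matrix.transpose_nonsing_inv, hs]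
  nth_rewrite 2 [← h1]
  rw [← mul_assoc, Matrix.nonsing_inv_mul _ hd, one_mul, Matrix.mul_nonsing_inv _ hd]

lemma tH_det_lower {d : ℕ} {K : Set (Euc d)} (hK : IsConvexBody K) (y : Euc d) {M : ℝ}
    (hM : ∀ x ∈ K, Real.exp ⟪x, y⟫ ≤ M * tI K (fun _ => 1) y) :
    Real.exp (-d) ≤ M ^ 2 * (2 * Real.pi) ^ d * (tH K y).det := by
  obtain ⟨T, hT⟩ := exists_whitening (tH_posDef hK y)
  have hTd : T.det ^ 2 * (tH K y).det = 1 := by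
    have := congrArg Matrix.det hT
    rw [Matrix.det_mul, Matrix.det_mul, Matrix.det_transpose, Matrix.det_one] at this
    linarith
  have hT0 : T.det ≠ 0 := by
    intro h; rw [h] at hTd; simp at hTd
  have hM0 : 0 ≤ M := by
    obtain ⟨x, hx⟩ := hK.2.2
    have := (Real.exp_pos _).le.trans (hM x (interior_subset hx))
    exact nonneg_of_mul_nonneg_left this (tI_one_pos hK y)
  set b := tbv K y with hb
  set q : Euc d → ℝ := fun x => -(1/2) * ‖Matrix.toEuclideanCLM (𝕜 := ℝ) T (x - b)‖ ^ 2 with hq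
  have hqc : Continuous q := by
    have : Continuous fun x : Euc d => Matrix.toEuclideanCLM (𝕜 := ℝ) T (x - b) :=
      (Matrix.toEuclideanCLM (𝕜 := ℝ) T).continuous.comp (by fun_prop)
    fun_prop
  have hmq : mom K q y = -(d / 2) := by
    have e1 : q = fun x => ∑ i, -(1/2) *
        (⟪x, WithLp.toLp 2 (T i)⟫ - ⟪tbv K y, WithLp.toLp 2 (T i)⟫) ^ 2 := by
      ext x
      rw [hq, ← Finset.mul_sum]
      simp only
      rw [EuclideanSpace.norm_sq_eq]
      congr 1
      congr 1; ext i
      rw [Real.norm_eq_abs, sq_abs, ← inner_sub_left, inner_eq_sum, Matrix.ofLp_toEuclideanCLM]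
      simp only [Matrix.mulVec, dotProduct]
      congr 1; congr 1; ext j; simp only [hb]; ring
    rw [e1, mom_sum hK _ (fun i => by fun_prop)]
    have e2 : ∀ i, mom K (fun x => -(1/2) *
        (⟪x, WithLp.toLp 2 (T i)⟫ - ⟪tbv K y, WithLp.toLp 2 (T i)⟫) ^ 2) y = -(1/2) := by
      intro i
      rw [mom_const_mul, ← tH_quad hK]
      have := congrFun (congrFun hT i) i
      rw [Matrix.mul_apply, Matrix.one_apply_eq] at this
      simp only [Matrix.mul_apply, Matrix.transpose_apply, Finset.sum_mul] at this
      rw [Finset.sum_comm] at this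
      rw [this]; ring
    rw [Finset.sum_congr rfl (fun i _ => e2 i)]
    simp; ring
  have h1 := exp_jensen hK hqc y
  rw [hmq] at h1
  have hpi : (0:ℝ) < Real.pi / (1/2) := by positivity
  have hG0 := GaussianFourier.integral_rexp_neg_mul_sq_norm (V := Euc d) (b := 1/2) (by norm_num)
  have hGi : Integrable (fun v : Euc d => Real.exp (-(1/2) * ‖v‖ ^ 2)) := by
    by_contra h
    rw [integral_undef h] at hG0
    exact (Real.rpow_pos_of_pos hpi _).ne hG0
  obtain ⟨hi, hG⟩ := integral_comp_linear T hT0 b _ hGi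
  have h2 : mom K (fun x => Real.exp (q x)) y ≤ M * (|T.det|⁻¹ * (Real.pi / (1/2)) ^ ((d:ℝ)/2)) := by
    unfold mom
    rw [div_le_iff₀ (tI_one_pos hK y)]
    rw [hG0] at hG
    simp only [finrank_euclideanSpace, Fintype.card_fin] at hG
    rw [← hG]
    have : tI K (fun x => Real.exp (q x)) y ≤
        ∫ x in K, (M * tI K (fun _ => 1) y) * Real.exp (q x) := by
      refine setIntegral_mono_on (tI_integrable hK.1 (by fun_prop) y)
        ((by fun_prop : Continuous _).continuousOn.integrableOn_compact hK.1)
        hK.1.measurableSet fun x hx => ?_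
      rw [mul_comm]
      exact mul_le_mul_of_nonneg_right (hM x hx) (Real.exp_pos _).le
    refine this.trans ?_
    rw [integral_const_mul]
    have h3 : ∫ x in K, Real.exp (q x) ≤ ∫ x, Real.exp (q x) :=
      setIntegral_le_integral hi (Filter.Eventually.of_forall fun x => (Real.exp_pos _).le)
    have h4 : 0 ≤ M * tI K (fun _ => 1) y := mul_nonneg hM0 (tI_one_pos hK y).le
    calc _ ≤ (M * tI K (fun _ => 1) y) * ∫ x, Real.exp (q x) := mul_le_mul_of_nonneg_left h3 h4
      _ = _ := by ring
  have h5 := h1.trans h2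
  have h6 := pow_le_pow_left₀ (Real.exp_pos _).le h5 2
  have h7 : ((Real.pi / (1/2)) ^ ((d:ℝ)/2)) ^ 2 = (2 * Real.pi) ^ d := by
    rw [← Real.rpow_natCast, ← Real.rpow_mul hpi.le, ← Real.rpow_natCast]
    congr 1
    · ring
    · push_cast; ring
  have h8 : Real.exp (-(d/2 : ℝ)) ^ 2 = Real.exp (-d) := by
    rw [← Real.exp_nat_mul]; congr 1; push_cast; ring
  rw [h8, mul_pow, mul_pow, h7, inv_pow, sq_abs] at h6
  have h9 : (T.det ^ 2)⁻¹ = (tH K y).det := by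
    field_simp
    linarith
  rw [h9] at h6
  linarith

/-! ### Polarity and the Blaschke-Santalo type bound -/

/-- Convex bodies with the origin in the interior. -/
def CB0 {d : ℕ} (K : Set (Euc d)) : Prop := IsConvexBody K ∧ (0 : Euc d) ∈ interior K

lemma CB0.zero_mem {d : ℕ} {K : Set (Euc d)} (h : CB0 K) : (0 : Euc d) ∈ K := interior_subset h.2

lemma CB0.mk' {d : ℕ} {K : Set (Euc d)} (h1 : IsCompact K) (h2 : Convex ℝ K)
    (h3 : (0 : Euc d) ∈ interior K) : CB0 K := ⟨⟨h1, h2, ⟨0, h3⟩⟩, h3⟩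

lemma CB0.exists_ball {d : ℕ} {K : Set (Euc d)} (h : CB0 K) :
    ∃ r > 0, ∀ x : Euc d, ‖x‖ ≤ r → x ∈ K := by
  have := mem_interior_iff_mem_nhds.1 h.2
  obtain ⟨r, hr, hb⟩ := Metric.nhds_basis_closedBall.mem_iff.1 this
  exact ⟨r, hr, fun x hx => hb (by simpa using hx)⟩

lemma zero_mem_interior_of_ball {d : ℕ} {K : Set (Euc d)} {r : ℝ} (hr : 0 < r)
    (h : ∀ x : Euc d, ‖x‖ ≤ r → x ∈ K) : (0 : Euc d) ∈ interior K := by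
  rw [mem_interior_iff_mem_nhds]
  exact Metric.nhds_basis_closedBall.mem_iff.2 ⟨r, hr, fun x hx => h x (by simpa using hx)⟩

lemma inner_centered {d : ℕ} {K : Set (Euc d)} (hK : IsConvexBody K) (h0 : (∫ x in K, x) = 0)
    (y : Euc d) : ∫ x in K, ⟪x, y⟫ = 0 := by
  have hi : IntegrableOn (fun x : Euc d => x) K :=
    continuous_id.continuousOn.integrableOn_compact hK.1
  have := integral_inner (𝕜 := ℝ) hi y
  rw [h0, inner_zero_right] at this
  simpa [real_inner_comm] using this

lemma centered_zero_mem {d : ℕ} {K : Set (Euc d)} (hK : IsConvexBody K)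
    (h0 : (∫ x in K, x) = 0) : CB0 K := by
  refine ⟨hK, ?_⟩
  by_contra hn
  obtain ⟨f, hf⟩ := geometric_hahn_banach_open_point hK.2.1.interior isOpen_interior hn
  set u := (InnerProductSpace.toDual ℝ (Euc d)).symm f
  have h : ∀ x, ⟪x, u⟫ = f x := by
    intro x
    rw [real_inner_comm, InnerProductSpace.toDual_symm_apply]
  have hle : ∀ x ∈ K, f x ≤ 0 := by
    intro x hx
    have h1 : x ∈ closure (interior K) := by
      rw [hK.2.1.closure_interior_eq_closure_of_nonempty_interior hK.2.2]
      exact subset_closure hx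
    have h2 : closure (interior K) ⊆ {x | f x ≤ 0} :=
      closure_minimal (fun a ha => by simpa using (hf a ha).le)
        (isClosed_le f.continuous continuous_const)
    exact h2 h1
  have hpos : 0 < ∫ x in K, - f x := by
    rw [setIntegral_pos_iff_support_of_nonneg_ae]
    · refine lt_of_lt_of_le (isOpen_interior.measure_pos volume hK.2.2) (measure_mono ?_)
      intro x hx
      refine ⟨?_, interior_subset hx⟩
      have := hf x hx
      simp only [map_zero] at this
      simp [this.ne]
    · refine (ae_restrict_iff' hK.1.measurableSet).2 (Filter.Eventually.of_forall ?_)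
      intro x hx
      simpa using hle x hx
    · exact (by fun_prop : Continuous fun x => - f x).continuousOn.integrableOn_compact hK.1
  rw [integral_neg] at hpos
  have h3 := inner_centered hK h0 u
  simp only [h] at h3
  rw [h3] at hpos
  simp at hpos

lemma polar_closed {d : ℕ} (K : Set (Euc d)) : IsClosed (polarSet K) := by
  have : polarSet K = ⋂ x ∈ K, {y : Euc d | ⟪x, y⟫ ≤ 1} := by
    ext y; simp [polarSet]
  rw [this]
  exact isClosed_biInter fun x _ => isClosed_le (by fun_prop) continuous_const

lemma polar_convex {d : ℕ} (K : Set (Euc d)) : Convex ℝ (polarSet K) := by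
  intro y hy z hz a b ha hb hab x hx
  rw [inner_add_right, inner_smul_right, inner_smul_right]
  have h1 := mul_le_mul_of_nonneg_left (hy x hx) ha
  have h2 := mul_le_mul_of_nonneg_left (hz x hx) hb
  linarith

lemma polar_anti {d : ℕ} {K L : Set (Euc d)} (h : K ⊆ L) : polarSet L ⊆ polarSet K :=
  fun _ hy x hx => hy x (h hx)

lemma polar_CB0 {d : ℕ} {K : Set (Euc d)} (hK : CB0 K) : CB0 (polarSet K) := by
  obtain ⟨r, hr, hb⟩ := hK.exists_ball
  obtain ⟨R, hR⟩ := hK.1.1.isBounded.exists_norm_le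
  have hR0 : 0 ≤ R := by simpa using hR 0 hK.zero_mem
  refine CB0.mk' ?_ (polar_convex K) ?_
  · refine Metric.isCompact_of_isClosed_isBounded (polar_closed K) ?_
    refine (Metric.isBounded_closedBall (x := (0 : Euc d)) (r := r⁻¹)).subset ?_
    intro y hy
    rw [mem_closedBall_zero_iff]
    rcases eq_or_ne y 0 with rfl | h0
    · simp [hr.le]
    have hn : 0 < ‖y‖ := norm_pos_iff.2 h0
    have := hy ((r / ‖y‖) • y) (hb _ (by
      rw [norm_smul, Real.norm_of_nonneg (by positivity)]; field_simp; rfl))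
    rw [inner_smul_left, real_inner_self_eq_norm_sq] at this
    simp only [conj_trivial] at this
    have e : r / ‖y‖ * ‖y‖ ^ 2 = r * ‖y‖ := by field_simp
    rw [e] at this
    rw [← one_div, le_div_iff₀ hr]; linarith
  · refine zero_mem_interior_of_ball (r := (R + 1)⁻¹) (by positivity) fun y hy x hx => ?_
    have h1 := real_inner_le_norm x y
    have h2 : ‖x‖ * ‖y‖ ≤ R * (R+1)⁻¹ := mul_le_mul (hR x hx) hy (norm_nonneg _) hR0
    have h3 : R * (R+1)⁻¹ ≤ 1 := by
      rw [← div_eq_mul_inv, div_le_one (by positivity)]; linarith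
    linarith

lemma subset_polar_polar {d : ℕ} (K : Set (Euc d)) : K ⊆ polarSet (polarSet K) := by
  intro x hx y hy
  rw [real_inner_comm]; exact hy x hx

lemma polar_polar' {d : ℕ} {K : Set (Euc d)} (h1 : IsClosed K) (h2 : Convex ℝ K)
    (h3 : (0 : Euc d) ∈ K) : polarSet (polarSet K) = K := by
  refine Subset.antisymm (fun b hb => ?_) (subset_polar_polar K)
  by_contra hn
  obtain ⟨u, c, hu, hc⟩ := exists_sep h2 h1 hn
  have hc0 : 0 < c := by simpa using hu 0 h3
  have h4 : c⁻¹ • u ∈ polarSet K := by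
    intro x hx
    rw [inner_smul_right, inv_mul_le_iff₀ hc0]
    linarith [hu x hx]
  have h5 := hb _ h4
  rw [inner_smul_left, real_inner_comm] at h5
  simp only [conj_trivial] at h5
  rw [inv_mul_le_iff₀ hc0] at h5
  linarith

lemma polar_polar {d : ℕ} {K : Set (Euc d)} (hK : CB0 K) : polarSet (polarSet K) = K :=
  polar_polar' hK.1.1.isClosed hK.1.2.1 hK.zero_mem

lemma tI_one_ge {d : ℕ} {K : Set (Euc d)} (hK : IsConvexBody K) (h0 : (∫ x in K, x) = 0)
    (y : Euc d) : volume.real K ≤ tI K (fun _ => 1) y := by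
  have h1 : ∫ x in K, (1 + ⟪x, y⟫) = volume.real K := by
    rw [integral_add, inner_centered hK h0]
    · simp
    · exact continuous_const.continuousOn.integrableOn_compact hK.1
    · exact (by fun_prop : Continuous fun x : Euc d => ⟪x, y⟫).continuousOn.integrableOn_compact hK.1
  rw [← h1]
  refine setIntegral_mono_on ?_ (tI_integrable hK.1 continuous_const y) hK.1.measurableSet ?_
  · exact (by fun_prop : Continuous fun x : Euc d => 1 + ⟪x, y⟫).continuousOn.integrableOn_compact hK.1
  · intro x _
    linarith [Real.add_one_le_exp ⟪x, y⟫]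

lemma IsConvexBody.vol_pos {d : ℕ} {K : Set (Euc d)} (hK : IsConvexBody K) :
    0 < volume.real K := by
  refine ENNReal.toReal_pos ?_ hK.1.measure_lt_top.ne
  exact ((isOpen_interior.measure_pos volume hK.2.2).trans_le (measure_mono interior_subset)).ne'

lemma tbv_injective {d : ℕ} {K : Set (Euc d)} (hK : IsConvexBody K) :
    Function.Injective (tbv K) := by
  intro x y hxy
  by_contra h
  have := tbv_mono hK h
  simp [hxy] at this

lemma BS_bound {d : ℕ} {K : Set (Euc d)} (hK : IsConvexBody K) (h0 : (∫ x in K, x) = 0) :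
    (d : ℝ) ^ d * volume.real K * volume.real (polarSet K) ≤
      (2 * Real.pi * Real.exp 3) ^ d := by
  have hK0 := centered_zero_mem hK h0
  have hP := polar_CB0 hK0
  set S := (d : ℝ) • polarSet K with hS
  have hScomp : IsCompact S := hP.1.1.smul _
  have hV := hK.vol_pos
  set V := volume.real K with hVdef
  set a : ℝ := V ^ 2 * ((2 * Real.pi * Real.exp 3) ^ d)⁻¹ with ha
  have hdet : ∀ y ∈ S, a ≤ (tH K y).det := by
    rintro _ ⟨y, hy, rfl⟩
    have hM := tH_det_lower hK ((d : ℝ) • y) (M := Real.exp d / V) (by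
      intro x hx
      have h1 : ⟪x, (d : ℝ) • y⟫ ≤ d := by
        rw [inner_smul_right]
        have := mul_le_mul_of_nonneg_left (hy x hx) (Nat.cast_nonneg (α := ℝ) d)
        linarith
      have h2 := tI_one_ge hK h0 ((d : ℝ) • y)
      calc Real.exp _ ≤ Real.exp d := Real.exp_le_exp.2 h1
        _ = Real.exp d / V * V := by field_simp
        _ ≤ _ := mul_le_mul_of_nonneg_left h2 (by positivity))
    rw [ha]
    have e1 : (2 * Real.pi * Real.exp 3) ^ d = (2 * Real.pi) ^ d * Real.exp d ^ 3 := by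
      rw [mul_pow, ← Real.exp_nat_mul, ← Real.exp_nat_mul]; congr 2; push_cast; ring
    rw [e1]
    have e2 : Real.exp (-d) = (Real.exp d)⁻¹ := Real.exp_neg _
    rw [e2, div_pow] at hM
    have hE := Real.exp_pos (d:ℝ)
    have h2p : 0 < (2 * Real.pi) ^ d := by positivity
    rw [← div_eq_mul_inv, div_le_iff₀ (by positivity)]
    rw [inv_le_iff_one_le_mul₀ hE] at hM
    have : V ^ 2 * 1 ≤ V ^ 2 * (Real.exp ↑d ^ 2 / V ^ 2 * (2 * Real.pi) ^ d * (tH K ((d:ℝ) • y)).det * Real.exp ↑d) :=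
      mul_le_mul_of_nonneg_left hM (by positivity)
    calc V ^ 2 = V ^ 2 * 1 := by ring
      _ ≤ _ := this
      _ = _ := by field_simp
  have hcov := lintegral_abs_det_fderiv_eq_addHaar_image (volume : Measure (Euc d))
    hScomp.measurableSet (fun x _ => (tbv_hasFDerivAt hK x).hasFDerivWithinAt)
    (tbv_injective hK).injOn
  have hle : ENNReal.ofReal a * volume S ≤ volume K := by
    calc ENNReal.ofReal a * volume S = ∫⁻ x in S, ENNReal.ofReal a := by simp
      _ ≤ ∫⁻ x in S, ENNReal.ofReal |(Matrix.toEuclideanCLM (𝕜 := ℝ) (tH K x)).det| := by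
        refine setLIntegral_mono' hScomp.measurableSet fun x hx => ?_
        rw [det_toECLM]
        exact ENNReal.ofReal_le_ofReal ((hdet x hx).trans (le_abs_self _))
      _ = _ := hcov
      _ ≤ _ := by
        refine measure_mono ?_
        rintro _ ⟨x, _, rfl⟩
        exact tbv_mem hK x
  have hle' := ENNReal.toReal_mono hK.1.measure_lt_top.ne hle
  rw [ENNReal.toReal_mul, ENNReal.toReal_ofReal (by positivity), hS,
    Measure.addHaar_smul] at hle'
  simp only [ENNReal.toReal_mul, finrank_euclideanSpace, Fintype.card_fin] at hle'
  rw [ENNReal.toReal_ofReal (abs_nonneg _), abs_of_nonneg (by positivity)] at hle'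
  change a * ((d:ℝ) ^ d * volume.real (polarSet K)) ≤ V at hle'
  rw [ha] at hle'
  have hc : 0 < (2 * Real.pi * Real.exp 3) ^ d := by positivity
  have h9 : V * ((d:ℝ) ^ d * V * volume.real (polarSet K)) ≤ V * (2 * Real.pi * Real.exp 3) ^ d := by
    calc V * ((d:ℝ) ^ d * V * volume.real (polarSet K)) = (V ^ 2 * ((2 * Real.pi * Real.exp 3) ^ d)⁻¹ *
        ((d:ℝ) ^ d * volume.real (polarSet K))) * (2 * Real.pi * Real.exp 3) ^ d := by
          field_simp
      _ ≤ _ := mul_le_mul_of_nonneg_right hle' hc.le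
  exact le_of_mul_le_mul_left h9 hV

/-- Symmetric sets have vanishing first moment. -/
lemma symm_centered {d : ℕ} {K : Set (Euc d)} (hs : ∀ x ∈ K, -x ∈ K) :
    (∫ x in K, x) = 0 := by
  have hneg : K = (fun x : Euc d => -x) ⁻¹' K := by
    ext x; exact ⟨fun h => hs x h, fun h => by simpa using hs _ h⟩
  have hmp : MeasurePreserving (fun x : Euc d => -x) volume volume :=
    Measure.measurePreserving_neg volume
  have h1 := hmp.setIntegral_preimage_emb (MeasurableEquiv.neg (Euc d)).measurableEmbedding
    (fun x => x) K
  rw [← hneg, integral_neg] at h1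
  have h2 : (2 : ℝ) • (∫ x in K, x) = 0 := by
    rw [two_smul]; nth_rewrite 1 [← h1]; simp
  simpa using h2

lemma BS_fact {d : ℕ} {K : Set (Euc d)} (hK : IsConvexBody K) (h0 : (∫ x in K, x) = 0) :
    (d.factorial : ℝ) * volume.real K * volume.real (polarSet K) ≤
      (2 * Real.pi * Real.exp 3) ^ d := by
  refine le_trans ?_ (BS_bound hK h0)
  have : (d.factorial : ℝ) ≤ (d:ℝ) ^ d := by exact_mod_cast Nat.factorial_le_pow d
  have h1 : 0 ≤ volume.real K := measureReal_nonneg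
  have h2 : 0 ≤ volume.real (polarSet K) := measureReal_nonneg
  gcongr

/-! ### Derivatives of determinants and adjugates -/

/-- Directional derivative of the determinant. -/
def detD {d : ℕ} (A A' : Matrix (Fin d) (Fin d) ℂ) : ℂ := ∑ i, ∑ k, A.adjugate i k * A' k i

def adjD {d : ℕ} (A A' : Matrix (Fin d) (Fin d) ℂ) : Matrix (Fin d) (Fin d) ℂ := fun i j =>
  detD (A.updateRow j (Pi.single i 1)) (A'.updateRow j 0)

lemma det_hasDerivAt {d : ℕ} {A : ℝ → Matrix (Fin d) (Fin d) ℂ} {A' : Matrix (Fin d) (Fin d) ℂ}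
    {t : ℝ} (h : ∀ i j, HasDerivAt (fun t => A t i j) (A' i j) t) :
    HasDerivAt (fun t => (A t).det) (detD (A t) A') t := by
  simp only [Matrix.det_apply]
  have h1 : ∀ σ : Equiv.Perm (Fin d), HasDerivAt
      (fun t => Equiv.Perm.sign σ • ∏ i, A t (σ i) i)
      (Equiv.Perm.sign σ • ∑ i, (∏ j ∈ Finset.univ.erase i, A t (σ j) j) • A' (σ i) i) t := by
    intro σ
    have := (HasDerivAt.fun_finsetProd (u := Finset.univ) (f := fun i t => A t (σ i) i)
      (f' := fun i => A' (σ i) i) (x := t) (fun i _ => h (σ i) i))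
    rcases Int.units_eq_one_or (Equiv.Perm.sign σ) with hs | hs
    · simpa [hs] using this
    · simpa [hs] using this.fun_neg
  have h2 := HasDerivAt.fun_sum (u := Finset.univ) (fun σ _ => h1 σ)
  refine h2.congr_deriv ?_
  unfold detD
  have h3 : ∀ i, ∑ k, (A t).adjugate i k * A' k i =
      ∑ σ : Equiv.Perm (Fin d), Equiv.Perm.sign σ •
        ((∏ j ∈ Finset.univ.erase i, A t (σ j) j) • A' (σ i) i) := by
    intro i
    have e := congrFun (Matrix.cramer_eq_adjugate_mulVec (A t) (fun k => A' k i)) i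
    rw [Matrix.cramer_apply] at e
    simp only [Matrix.mulVec, dotProduct] at e
    rw [← e, Matrix.det_apply]
    refine Finset.sum_congr rfl fun σ _ => ?_
    congr 1
    rw [← Finset.mul_prod_erase _ _ (Finset.mem_univ i), Matrix.updateCol_self, smul_eq_mul,
      mul_comm]
    congr 1
    refine Finset.prod_congr rfl fun j hj => ?_
    rw [Matrix.updateCol_ne (Finset.ne_of_mem_erase hj)]
  simp only [h3]
  rw [Finset.sum_comm]
  simp only [Finset.smul_sum]

lemma adj_hasDerivAt {d : ℕ} {A : ℝ → Matrix (Fin d) (Fin d) ℂ} {A' : Matrix (Fin d) (Fin d) ℂ}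
    {t : ℝ} (h : ∀ i j, HasDerivAt (fun t => A t i j) (A' i j) t) (i j : Fin d) :
    HasDerivAt (fun t => (A t).adjugate i j) (adjD (A t) A' i j) t := by
  simp only [Matrix.adjugate_apply]
  refine det_hasDerivAt (A := fun t => (A t).updateRow j (Pi.single i 1)) fun p q => ?_
  rcases eq_or_ne p j with rfl | hp
  · simp only [Matrix.updateRow_self]
    exact hasDerivAt_const _ _
  · simp only [Matrix.updateRow_ne hp]
    exact h p q

/-- The adjugate derivative formula. -/
lemma adjD_formula {d : ℕ} (A A' : Matrix (Fin d) (Fin d) ℂ) :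
    A.det • adjD A A' = detD A A' • A.adjugate - A.adjugate * A' * A.adjugate := by
  set B : ℝ → Matrix (Fin d) (Fin d) ℂ := fun t => A + (t : ℂ) • A' with hB
  have hb : ∀ i j, HasDerivAt (fun t => B t i j) (A' i j) 0 := by
    intro i j
    have h1 : HasDerivAt (fun t : ℝ => (t : ℂ)) 1 0 := Complex.ofRealCLM.hasDerivAt
    simpa [hB] using (h1.mul_const (A' i j)).const_add (A i j)
  have hB0 : B 0 = A := by simp [hB]
  have hdet := det_hasDerivAt hb
  have hadj := adj_hasDerivAt hb
  rw [hB0] at hdet hadj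
  have key : adjD A A' * A + A.adjugate * A' = detD A A' • (1 : Matrix (Fin d) (Fin d) ℂ) := by
    ext i j
    have h1 : HasDerivAt (fun t => ∑ k, (B t).adjugate i k * B t k j)
        (∑ k, (adjD A A' i k * A k j + A.adjugate i k * A' k j)) 0 := by
      have := HasDerivAt.fun_sum (u := Finset.univ) (fun k _ => (hadj i k).mul (hb k j))
      rw [hB0] at this
      exact this
    have h2 : (fun t => ∑ k, (B t).adjugate i k * B t k j) =
        fun t => (B t).det * (1 : Matrix (Fin d) (Fin d) ℂ) i j := by
      ext t
      rw [← Matrix.mul_apply, Matrix.adjugate_mul]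
      rfl
    rw [h2] at h1
    have h3 := h1.unique (hdet.mul_const _)
    rw [Finset.sum_add_distrib] at h3
    simpa [Matrix.mul_apply] using h3
  have k2 := congrArg (· * A.adjugate) key
  simp only [add_mul, mul_assoc, Matrix.mul_adjugate, smul_mul_assoc, one_mul] at k2
  rw [mul_smul_comm, mul_one] at k2
  rw [mul_assoc]
  exact eq_sub_of_add_eq k2

/-- The Piola identity for a totally symmetric derivative. -/
lemma piola {d : ℕ} (A : Matrix (Fin d) (Fin d) ℂ) (hA : A.det ≠ 0)
    (T : Fin d → Fin d → Fin d → ℂ) (hT : ∀ k j l, T k j l = T k l j) (k : Fin d) :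
    ∑ j, adjD A (fun p q => T p q j) j k = 0 := by
  have h : A.det * ∑ j, adjD A (fun p q => T p q j) j k = 0 := by
    rw [Finset.mul_sum]
    have h1 : ∀ j, A.det * adjD A (fun p q => T p q j) j k =
        detD A (fun p q => T p q j) * A.adjugate j k -
          (A.adjugate * (Matrix.of fun p q => T p q j) * A.adjugate) j k := by
      intro j
      have := congrFun (congrFun (adjD_formula A (fun p q => T p q j)) j) k
      simp only [Matrix.smul_apply, Matrix.sub_apply, smul_eq_mul] at this
      exact this
    simp only [h1, Finset.sum_sub_distrib, detD, Matrix.mul_apply, Matrix.of_apply, Finset.sum_mul]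
    rw [sub_eq_zero]
    have h2 : ∑ x, ∑ x_1, ∑ i, A.adjugate x i * T i x_1 x * A.adjugate x_1 k =
        ∑ x_1, ∑ x, ∑ i, A.adjugate x i * T i x_1 x * A.adjugate x_1 k := Finset.sum_comm
    rw [h2]
    refine Finset.sum_congr rfl fun j _ => Finset.sum_congr rfl fun p _ =>
      Finset.sum_congr rfl fun q _ => ?_
    rw [hT q p j]
  exact (mul_eq_zero.1 h).resolve_left hA

/-! ### Functions of polynomial growth -/

/-- Continuous in `z`, with polynomial growth in `z` uniformly for `s ∈ [-1, 2]`. -/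
def PG {d : ℕ} (f : ℝ → Euc d × Euc d → ℂ) : Prop :=
  (∀ s, Continuous (f s)) ∧ ∃ (C : ℝ) (k : ℕ), 0 ≤ C ∧
    ∀ s ∈ Icc (-1 : ℝ) 2, ∀ z, ‖f s z‖ ≤ C * (1 + ‖z‖) ^ k

lemma PG.add {d : ℕ} {f g : ℝ → Euc d × Euc d → ℂ} (hf : PG f) (hg : PG g) :
    PG (fun s z => f s z + g s z) := by
  obtain ⟨hf0, C, k, hC, hf⟩ := hf
  obtain ⟨hg0, D, l, hD, hg⟩ := hg
  refine ⟨fun s => (hf0 s).add (hg0 s), C + D, k + l, add_nonneg hC hD, fun s hs z => ?_⟩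
  have h1 : 1 ≤ 1 + ‖z‖ := by linarith [norm_nonneg z]
  have h2 : (1 + ‖z‖) ^ k ≤ (1 + ‖z‖) ^ (k + l) := pow_le_pow_right₀ h1 (by omega)
  have h3 : (1 + ‖z‖) ^ l ≤ (1 + ‖z‖) ^ (k + l) := pow_le_pow_right₀ h1 (by omega)
  calc _ ≤ ‖f s z‖ + ‖g s z‖ := norm_add_le _ _
    _ ≤ C * (1 + ‖z‖) ^ k + D * (1 + ‖z‖) ^ l := add_le_add (hf s hs z) (hg s hs z)
    _ ≤ C * (1 + ‖z‖) ^ (k + l) + D * (1 + ‖z‖) ^ (k + l) := by gcongr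
    _ = _ := by ring

lemma PG.mul {d : ℕ} {f g : ℝ → Euc d × Euc d → ℂ} (hf : PG f) (hg : PG g) :
    PG (fun s z => f s z * g s z) := by
  obtain ⟨hf0, C, k, hC, hf⟩ := hf
  obtain ⟨hg0, D, l, hD, hg⟩ := hg
  refine ⟨fun s => (hf0 s).mul (hg0 s), C * D, k + l, mul_nonneg hC hD, fun s hs z => ?_⟩
  rw [norm_mul]
  calc _ ≤ (C * (1 + ‖z‖) ^ k) * (D * (1 + ‖z‖) ^ l) :=
        mul_le_mul (hf s hs z) (hg s hs z) (norm_nonneg _) (by positivity)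
    _ = _ := by ring

lemma PG.sfun {d : ℕ} {f : ℝ → ℂ} (hf : Continuous f) :
    PG (fun s (_ : Euc d × Euc d) => f s) := by
  obtain ⟨C, hC⟩ := (isCompact_Icc (a := (-1 : ℝ)) (b := 2)).exists_bound_of_continuousOn
    hf.continuousOn
  refine ⟨fun s => continuous_const, |C|, 0, abs_nonneg C, fun s hs z => ?_⟩
  simpa using (hC s hs).trans (le_abs_self C)

lemma PG.const {d : ℕ} (c : ℂ) : PG (fun _ (_ : Euc d × Euc d) => c) :=
  PG.sfun (f := fun _ => c) continuous_const

lemma PG.neg {d : ℕ} {f : ℝ → Euc d × Euc d → ℂ} (hf : PG f) : PG (fun s z => - f s z) := by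
  simpa using (PG.const (-1)).mul hf

lemma PG.sub {d : ℕ} {f g : ℝ → Euc d × Euc d → ℂ} (hf : PG f) (hg : PG g) :
    PG (fun s z => f s z - g s z) := by
  simpa [sub_eq_add_neg] using hf.add hg.neg

lemma PG.sum {d : ℕ} {ι : Type*} (u : Finset ι) {f : ι → ℝ → Euc d × Euc d → ℂ}
    (hf : ∀ i, PG (f i)) : PG (fun s z => ∑ i ∈ u, f i s z) := by
  classical
  induction u using Finset.induction_on with
  | empty => simpa using PG.const 0
  | insert a u ha ih => simpa [Finset.sum_insert ha] using (hf a).add ih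

lemma PG.prod {d : ℕ} {ι : Type*} (u : Finset ι) {f : ι → ℝ → Euc d × Euc d → ℂ}
    (hf : ∀ i, PG (f i)) : PG (fun s z => ∏ i ∈ u, f i s z) := by
  classical
  induction u using Finset.induction_on with
  | empty => simpa using PG.const 1
  | insert a u ha ih => simpa [Finset.prod_insert ha] using (hf a).mul ih

lemma PG.det {d n : ℕ} {A : ℝ → Euc d × Euc d → Matrix (Fin n) (Fin n) ℂ}
    (hA : ∀ i j, PG (fun s z => A s z i j)) : PG (fun s z => (A s z).det) := by
  simp only [Matrix.det_apply']
  exact PG.sum _ fun σ => (PG.const _).mul (PG.prod _ fun i => hA _ _)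

lemma PG.adj {d n : ℕ} {A : ℝ → Euc d × Euc d → Matrix (Fin n) (Fin n) ℂ}
    (hA : ∀ i j, PG (fun s z => A s z i j)) (i j : Fin n) :
    PG (fun s z => (A s z).adjugate i j) := by
  simp only [Matrix.adjugate_apply]
  refine PG.det fun p q => ?_
  rcases eq_or_ne p j with rfl | hp
  · simp only [Matrix.updateRow_self]
    exact PG.const _
  · simp only [Matrix.updateRow_ne hp]
    exact hA p q

lemma PG.detD {d n : ℕ} {A A' : ℝ → Euc d × Euc d → Matrix (Fin n) (Fin n) ℂ}
    (hA : ∀ i j, PG (fun s z => A s z i j)) (hA' : ∀ i j, PG (fun s z => A' s z i j)) :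
    PG (fun s z => detD (A s z) (A' s z)) :=
  PG.sum _ fun i => PG.sum _ fun k => (PG.adj hA i k).mul (hA' k i)

lemma PG.adjD {d n : ℕ} {A A' : ℝ → Euc d × Euc d → Matrix (Fin n) (Fin n) ℂ}
    (hA : ∀ i j, PG (fun s z => A s z i j)) (hA' : ∀ i j, PG (fun s z => A' s z i j))
    (i j : Fin n) : PG (fun s z => adjD (A s z) (A' s z) i j) := by
  refine PG.detD (fun p q => ?_) (fun p q => ?_)
  · rcases eq_or_ne p j with rfl | hp
    · simp only [Matrix.updateRow_self]
      exact PG.const _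
    · simp only [Matrix.updateRow_ne hp]
      exact hA p q
  · rcases eq_or_ne p j with rfl | hp
    · simp only [Matrix.updateRow_self]
      exact PG.const _
    · simp only [Matrix.updateRow_ne hp]
      exact hA' p q

lemma PG.real_fst {d : ℕ} {g : Euc d → ℝ} (hg : Continuous g) {C : ℝ} {k : ℕ}
    (hb : ∀ x, |g x| ≤ C * (1 + ‖x‖) ^ k) : PG (fun _ (z : Euc d × Euc d) => (g z.1 : ℂ)) := by
  have hC : 0 ≤ C := by simpa using (abs_nonneg _).trans (hb 0)
  refine ⟨fun s => by fun_prop, C, k, hC, fun s hs z => ?_⟩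
  rw [Complex.norm_real, Real.norm_eq_abs]
  refine (hb _).trans ?_
  have := norm_fst_le z
  gcongr

lemma PG.real_snd {d : ℕ} {g : Euc d → ℝ} (hg : Continuous g) {C : ℝ} {k : ℕ}
    (hb : ∀ x, |g x| ≤ C * (1 + ‖x‖) ^ k) : PG (fun _ (z : Euc d × Euc d) => (g z.2 : ℂ)) := by
  have hC : 0 ≤ C := by simpa using (abs_nonneg _).trans (hb 0)
  refine ⟨fun s => by fun_prop, C, k, hC, fun s hs z => ?_⟩
  rw [Complex.norm_real, Real.norm_eq_abs]
  refine (hb _).trans ?_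
  have := norm_snd_le z
  gcongr

instance instHaarProd {d : ℕ} : (volume : Measure (Euc d × Euc d)).IsAddHaarMeasure :=
  inferInstanceAs ((volume : Measure (Euc d)).prod (volume : Measure (Euc d))).IsAddHaarMeasure

lemma integrable_poly_exp {d : ℕ} (C : ℝ) (k : ℕ) {δ : ℝ} (hδ : 0 < δ) :
    Integrable (fun z : Euc d × Euc d => C * (1 + ‖z‖) ^ k * Real.exp (-δ * ‖z‖)) := by
  set N : ℕ := Module.finrank ℝ (Euc d × Euc d) + 1 with hN
  have hi : Integrable (fun z : Euc d × Euc d => (1 + ‖z‖) ^ (-(N:ℝ))) :=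
    integrable_one_add_norm (by rw [hN]; push_cast; linarith)
  set m := k + N with hm
  set B : ℝ := |C| * (m.factorial / δ ^ m * Real.exp δ) with hB
  refine (hi.const_mul B).mono' (by fun_prop) (Filter.Eventually.of_forall fun z => ?_)
  have h0 : 0 < 1 + ‖z‖ := by linarith [norm_nonneg z]
  have h1 := Real.pow_div_factorial_le_exp (δ * (1 + ‖z‖)) (by positivity) m
  have hf : (0:ℝ) < m.factorial := by exact_mod_cast Nat.factorial_pos m
  rw [div_le_iff₀ hf, mul_pow] at h1
  have h2 : (1 + ‖z‖) ^ m * Real.exp (-δ * ‖z‖) ≤ m.factorial / δ ^ m * Real.exp δ := by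
    have e : Real.exp (δ * (1 + ‖z‖)) = Real.exp δ * Real.exp (δ * ‖z‖) := by
      rw [← Real.exp_add]; congr 1; ring
    have e2 : Real.exp (-δ * ‖z‖) * Real.exp (δ * ‖z‖) = 1 := by
      rw [← Real.exp_add]; simp
    rw [e] at h1
    have hp : 0 < δ ^ m := by positivity
    rw [div_mul_eq_mul_div, le_div_iff₀ hp]
    calc (1 + ‖z‖) ^ m * Real.exp (-δ * ‖z‖) * δ ^ m
        = (δ ^ m * (1 + ‖z‖) ^ m) * Real.exp (-δ * ‖z‖) := by ring
      _ ≤ (Real.exp δ * Real.exp (δ * ‖z‖) * m.factorial) * Real.exp (-δ * ‖z‖) := by gcongr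
      _ = Real.exp δ * m.factorial * (Real.exp (-δ * ‖z‖) * Real.exp (δ * ‖z‖)) := by ring
      _ = _ := by rw [e2]; ring
  rw [norm_mul, norm_mul, Real.norm_eq_abs, Real.norm_of_nonneg (by positivity),
    Real.norm_of_nonneg (Real.exp_pos _).le, hB, mul_assoc, mul_assoc]
  refine mul_le_mul_of_nonneg_left ?_ (abs_nonneg C)
  rw [Real.rpow_neg h0.le, Real.rpow_natCast, ← div_eq_mul_inv, le_div_iff₀ (by positivity)]
  calc _ = (1 + ‖z‖) ^ m * Real.exp (-δ * ‖z‖) := by rw [hm, pow_add]; ring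
    _ ≤ _ := h2

/-! ### The interpolation identity -/

def zp {d : ℕ} (k : Fin d) (z : Euc d × Euc d) : ℂ := (z.1 k : ℂ) + Complex.I * (z.2 k : ℂ)

def zq {d : ℕ} (k : Fin d) (z : Euc d × Euc d) : ℂ := (z.1 k : ℂ) - Complex.I * (z.2 k : ℂ)

def zβ {d : ℕ} (L : Set (Euc d)) (k : Fin d) (z : Euc d × Euc d) : ℂ :=
  (tb L k z.1 : ℂ) - Complex.I * (tb L k z.2 : ℂ)

/-- the interpolated map -/
def zr {d : ℕ} (L : Set (Euc d)) (s : ℝ) (k : Fin d) (z : Euc d × Euc d) : ℂ :=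
  (s : ℂ) ^ 2 * zβ L k z + (1 - (s : ℂ)) ^ 2 * zq k z

/-- the exponent -/
def zE {d : ℕ} (L : Set (Euc d)) (s : ℝ) (z : Euc d × Euc d) : ℂ :=
  -∑ k, zp k z * zr L s k z

/-- the matrix -/
def zM {d : ℕ} (L : Set (Euc d)) (s : ℝ) (z : Euc d × Euc d) : Matrix (Fin d) (Fin d) ℂ :=
  fun k j => (s : ℂ) ^ 2 * ((tH L z.1 k j : ℂ) + (tH L z.2 k j : ℂ)) +
    2 * (1 - (s : ℂ)) ^ 2 * (1 : Matrix (Fin d) (Fin d) ℂ) k j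

/-- `s`-derivative of `zr` -/
def zv {d : ℕ} (L : Set (Euc d)) (s : ℝ) (k : Fin d) (z : Euc d × Euc d) : ℂ :=
  2 * (s : ℂ) * zβ L k z - 2 * (1 - (s : ℂ)) * zq k z

/-- `s`-derivative of `zM` -/
def zMs {d : ℕ} (L : Set (Euc d)) (s : ℝ) (z : Euc d × Euc d) : Matrix (Fin d) (Fin d) ℂ :=
  fun k j => 2 * (s : ℂ) * ((tH L z.1 k j : ℂ) + (tH L z.2 k j : ℂ)) -
    4 * (1 - (s : ℂ)) * (1 : Matrix (Fin d) (Fin d) ℂ) k j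

/-- directional derivative of `zβ` -/
def zβd {d : ℕ} (L : Set (Euc d)) (k : Fin d) (w z : Euc d × Euc d) : ℂ :=
  ((∑ j, tH L z.1 k j * w.1 j : ℝ) : ℂ) - Complex.I * ((∑ j, tH L z.2 k j * w.2 j : ℝ) : ℂ)

/-- directional derivative of `zM` -/
def zMd {d : ℕ} (L : Set (Euc d)) (s : ℝ) (w z : Euc d × Euc d) : Matrix (Fin d) (Fin d) ℂ :=
  fun k l => (s : ℂ) ^ 2 * (((∑ j, tT L z.1 k l j * w.1 j : ℝ) : ℂ) +
    ((∑ j, tT L z.2 k l j * w.2 j : ℝ) : ℂ))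

/-- directional derivative of `zr` -/
def zrd {d : ℕ} (L : Set (Euc d)) (s : ℝ) (k : Fin d) (w z : Euc d × Euc d) : ℂ :=
  (s : ℂ) ^ 2 * zβd L k w z + (1 - (s : ℂ)) ^ 2 * zq k w

/-- directional derivative of `zv` -/
def zvd {d : ℕ} (L : Set (Euc d)) (s : ℝ) (k : Fin d) (w z : Euc d × Euc d) : ℂ :=
  2 * (s : ℂ) * zβd L k w z - 2 * (1 - (s : ℂ)) * zq k w

/-- directional derivative of `zE` -/
def zEd {d : ℕ} (L : Set (Euc d)) (s : ℝ) (w z : Euc d × Euc d) : ℂ :=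
  -∑ k, (zp k w * zr L s k z + zp k z * zrd L s k w z)

/-- prefactor of the vector field -/
def zY {d : ℕ} (L : Set (Euc d)) (s : ℝ) (j : Fin d) (z : Euc d × Euc d) : ℂ :=
  ∑ k, (zM L s z).adjugate j k * zv L s k z

/-- directional derivative of the prefactor -/
def zYd {d : ℕ} (L : Set (Euc d)) (s : ℝ) (j : Fin d) (w z : Euc d × Euc d) : ℂ :=
  ∑ k, (adjD (zM L s z) (zMd L s w z) j k * zv L s k z +
    (zM L s z).adjugate j k * zvd L s k w z)

lemma hasDerivAt_line {d : ℕ} {g : Euc d → ℝ} {x : Euc d} {G : Euc d →L[ℝ] ℝ}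
    (hg : HasFDerivAt g G x) (v : Euc d) :
    HasDerivAt (fun t : ℝ => ((g (x + t • v) : ℝ) : ℂ)) ((G v : ℝ) : ℂ) 0 := by
  have h1 : HasDerivAt (fun t : ℝ => x + t • v) v 0 := by
    simpa using ((hasDerivAt_id (0:ℝ)).smul_const v).const_add x
  have h2 : HasFDerivAt g G (x + (0:ℝ) • v) := by simpa using hg
  exact (h2.comp_hasDerivAt (0:ℝ) h1).ofReal_comp

lemma coord_line {d : ℕ} (k : Fin d) (x v : Euc d) :
    HasDerivAt (fun t : ℝ => (((x + t • v) k : ℝ) : ℂ)) ((v k : ℝ) : ℂ) 0 := by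
  have h1 : HasDerivAt (fun t : ℝ => (t : ℂ)) 1 0 := Complex.ofRealCLM.hasDerivAt
  simpa using (h1.mul_const ((v k : ℝ) : ℂ)).const_add ((x k : ℝ) : ℂ)

lemma zp_line {d : ℕ} (k : Fin d) (z w : Euc d × Euc d) :
    HasDerivAt (fun t : ℝ => zp k (z + t • w)) (zp k w) 0 :=
  (coord_line k z.1 w.1).add ((coord_line k z.2 w.2).const_mul Complex.I)

lemma zq_line {d : ℕ} (k : Fin d) (z w : Euc d × Euc d) :
    HasDerivAt (fun t : ℝ => zq k (z + t • w)) (zq k w) 0 :=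
  (coord_line k z.1 w.1).sub ((coord_line k z.2 w.2).const_mul Complex.I)

lemma tb_line {d : ℕ} {L : Set (Euc d)} (hL : IsConvexBody L) (k : Fin d) (x v : Euc d) :
    HasDerivAt (fun t : ℝ => ((tb L k (x + t • v) : ℝ) : ℂ))
      ((∑ j, tH L x k j * v j : ℝ) : ℂ) 0 := by
  obtain ⟨G, hG, h⟩ := tb_hasFDerivAt hL k x
  rw [← h v]
  exact hasDerivAt_line hG v

lemma tH_line {d : ℕ} {L : Set (Euc d)} (hL : IsConvexBody L) (k j : Fin d) (x v : Euc d) :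
    HasDerivAt (fun t : ℝ => ((tH L (x + t • v) k j : ℝ) : ℂ))
      ((∑ l, tT L x k j l * v l : ℝ) : ℂ) 0 := by
  obtain ⟨G, hG, h⟩ := tH_hasFDerivAt hL k j x
  rw [← h v]
  exact hasDerivAt_line hG v

section lines
variable {d : ℕ} {L : Set (Euc d)}

lemma zβ_line (hL : IsConvexBody L) (k : Fin d) (z w : Euc d × Euc d) :
    HasDerivAt (fun t : ℝ => zβ L k (z + t • w)) (zβd L k w z) 0 :=
  (tb_line hL k z.1 w.1).sub ((tb_line hL k z.2 w.2).const_mul Complex.I)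

lemma zr_line (hL : IsConvexBody L) (s : ℝ) (k : Fin d) (z w : Euc d × Euc d) :
    HasDerivAt (fun t : ℝ => zr L s k (z + t • w)) (zrd L s k w z) 0 :=
  ((zβ_line hL k z w).const_mul _).add ((zq_line k z w).const_mul _)

lemma zv_line (hL : IsConvexBody L) (s : ℝ) (k : Fin d) (z w : Euc d × Euc d) :
    HasDerivAt (fun t : ℝ => zv L s k (z + t • w)) (zvd L s k w z) 0 :=
  ((zβ_line hL k z w).const_mul _).sub ((zq_line k z w).const_mul _)

lemma zM_line (hL : IsConvexBody L) (s : ℝ) (k j : Fin d) (z w : Euc d × Euc d) :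
    HasDerivAt (fun t : ℝ => zM L s (z + t • w) k j) (zMd L s w z k j) 0 :=
  (((tH_line hL k j z.1 w.1).add (tH_line hL k j z.2 w.2)).const_mul _).add_const _

lemma zE_line (hL : IsConvexBody L) (s : ℝ) (z w : Euc d × Euc d) :
    HasDerivAt (fun t : ℝ => zE L s (z + t • w)) (zEd L s w z) 0 := by
  have := HasDerivAt.fun_sum (u := Finset.univ)
    (fun k _ => (zp_line k z w).fun_mul (zr_line hL s k z w))
  simp only [zero_smul, add_zero] at this
  exact this.fun_neg

lemma zY_line (hL : IsConvexBody L) (s : ℝ) (j : Fin d) (z w : Euc d × Euc d) :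
    HasDerivAt (fun t : ℝ => zY L s j (z + t • w)) (zYd L s j w z) 0 := by
  have hM : ∀ i j, HasDerivAt (fun t : ℝ => zM L s (z + t • w) i j) (zMd L s w z i j) 0 :=
    fun i j => zM_line hL s i j z w
  have := HasDerivAt.fun_sum (u := Finset.univ)
    (fun k _ => (adj_hasDerivAt hM j k).fun_mul (zv_line hL s k z w))
  simp only [zero_smul, add_zero] at this
  exact this

lemma zW_line (hL : IsConvexBody L) (s : ℝ) (j : Fin d) (z w : Euc d × Euc d) :
    HasLineDerivAt ℝ (fun z => zY L s j z * Complex.exp (zE L s z))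
      ((zYd L s j w z + zY L s j z * zEd L s w z) * Complex.exp (zE L s z)) z w := by
  have := (zY_line hL s j z w).fun_mul (zE_line hL s z w).cexp
  simp only [zero_smul, add_zero] at this
  refine this.congr_deriv ?_
  ring

end lines

lemma zM_eq_real {d : ℕ} (L : Set (Euc d)) (s : ℝ) (z : Euc d × Euc d) :
    zM L s z = ((s ^ 2) • (tH L z.1 + tH L z.2) + (2 * (1 - s) ^ 2) •
      (1 : Matrix (Fin d) (Fin d) ℝ)).map (Complex.ofRealHom) := by
  ext k j
  simp only [zM, Matrix.map_apply, Matrix.add_apply, Matrix.smul_apply, smul_eq_mul,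
    Complex.ofRealHom_eq_coe, Matrix.one_apply]
  split_ifs <;> push_cast <;> ring

lemma zM_det {d : ℕ} (L : Set (Euc d)) (s : ℝ) (z : Euc d × Euc d) :
    (zM L s z).det = (((s ^ 2) • (tH L z.1 + tH L z.2) + (2 * (1 - s) ^ 2) •
      (1 : Matrix (Fin d) (Fin d) ℝ)).det : ℂ) := by
  rw [zM_eq_real]
  exact (RingHom.map_det Complex.ofRealHom _).symm

lemma zM_det_ne {d : ℕ} {L : Set (Euc d)} (hL : IsConvexBody L) (s : ℝ) (z : Euc d × Euc d) :
    (zM L s z).det ≠ 0 := by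
  rw [zM_det]
  have h1 := (tH_posDef hL z.1).add (tH_posDef hL z.2)
  have : ((s ^ 2) • (tH L z.1 + tH L z.2) + (2 * (1 - s) ^ 2) •
      (1 : Matrix (Fin d) (Fin d) ℝ)).PosDef := by
    rcases eq_or_ne s 0 with rfl | hs
    · simpa using (Matrix.PosDef.one (n := Fin d) (R := ℝ)).smul (show (0:ℝ) < 2 by norm_num)
    · exact (h1.smul (by positivity : 0 < s ^ 2)).add_posSemidef
        (Matrix.PosSemidef.one.smul (by positivity))
  exact_mod_cast this.det_pos.ne'

def zFs {d : ℕ} (L : Set (Euc d)) (s : ℝ) (z : Euc d × Euc d) : ℂ :=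
  detD (zM L s z) (zMs L s z) + (zM L s z).det * (-∑ k, zp k z * zv L s k z)

lemma zF_hasDerivAt {d : ℕ} (L : Set (Euc d)) (s : ℝ) (z : Euc d × Euc d) :
    HasDerivAt (fun s => (zM L s z).det * Complex.exp (zE L s z))
      (zFs L s z * Complex.exp (zE L s z)) s := by
  have h1 : HasDerivAt (fun t : ℝ => (t : ℂ)) 1 s := Complex.ofRealCLM.hasDerivAt
  have h2 : HasDerivAt (fun t : ℝ => (t : ℂ) ^ 2) (2 * (s:ℂ)) s := by simpa using h1.fun_pow 2
  have h3 : HasDerivAt (fun t : ℝ => (1 - (t : ℂ)) ^ 2) (-2 * (1 - (s:ℂ))) s := by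
    refine ((h1.const_sub 1).fun_pow 2).congr_deriv ?_
    simp
  have hM : ∀ i j, HasDerivAt (fun s => zM L s z i j) (zMs L s z i j) s := by
    intro i j
    refine ((h2.mul_const _).add ((h3.const_mul 2).mul_const _)).congr_deriv ?_
    simp only [zMs]; ring
  have hr : ∀ k, HasDerivAt (fun s => zr L s k z) (zv L s k z) s := by
    intro k
    refine ((h2.mul_const _).add (h3.mul_const _)).congr_deriv ?_
    simp only [zv]; ring
  have hE : HasDerivAt (fun s => zE L s z) (-∑ k, zp k z * zv L s k z) s :=
    (HasDerivAt.fun_sum (u := Finset.univ) (fun k _ => (hr k).const_mul (zp k z))).fun_neg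
  refine ((det_hasDerivAt hM).fun_mul hE.cexp).congr_deriv ?_
  simp only [zFs]; ring

/-- First coordinate direction. -/
def w1 {d : ℕ} (j : Fin d) : Euc d × Euc d := (EuclideanSpace.single j 1, 0)
/-- Second coordinate direction. -/
def w2 {d : ℕ} (j : Fin d) : Euc d × Euc d := (0, EuclideanSpace.single j 1)

lemma adj_contract {d : ℕ} (A : Matrix (Fin d) (Fin d) ℂ) (p v : Fin d → ℂ) :
    ∑ j, (∑ k, A.adjugate j k * v k) * (-∑ k, p k * A k j) = A.det * (-∑ k, p k * v k) := by
  have h1 : ∑ j, (∑ k, A.adjugate j k * v k) * (-∑ k, p k * A k j) =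
      -(dotProduct (Matrix.vecMul p A) (Matrix.mulVec A.adjugate v)) := by
    simp only [dotProduct, Matrix.vecMul, Matrix.mulVec]
    rw [← Finset.sum_neg_distrib]
    refine Finset.sum_congr rfl fun j _ => ?_
    ring
  rw [h1, Matrix.dotProduct_mulVec, Matrix.vecMul_vecMul, Matrix.mul_adjugate,
    ← Matrix.dotProduct_mulVec, Matrix.smul_mulVec, Matrix.one_mulVec, dotProduct_smul]
  simp [dotProduct]

lemma zdiv_identity {d : ℕ} {L : Set (Euc d)} (hL : IsConvexBody L) (s : ℝ) (z : Euc d × Euc d) :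
    ∑ j, ((zYd L s j (w1 j) z + zY L s j z * zEd L s (w1 j) z) +
      Complex.I * (zYd L s j (w2 j) z + zY L s j z * zEd L s (w2 j) z)) = zFs L s z := by
  have hI := Complex.I_mul_I
  have b1 : ∀ k j, zβd L k (w1 j) z = (tH L z.1 k j : ℂ) := by
    intro k j; simp [zβd, w1]
  have b2 : ∀ k j, zβd L k (w2 j) z = - Complex.I * (tH L z.2 k j : ℂ) := by
    intro k j; simp [zβd, w2]
  have q1 : ∀ k j, zq k (w1 j) = (1 : Matrix (Fin d) (Fin d) ℂ) k j := by
    intro k j; simp [zq, w1, Matrix.one_apply]; split_ifs <;> simp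
  have q2 : ∀ k j, zq k (w2 j) = - Complex.I * (1 : Matrix (Fin d) (Fin d) ℂ) k j := by
    intro k j; simp [zq, w2, Matrix.one_apply]; split_ifs <;> simp
  have p1 : ∀ k j, zp k (w1 j) = (1 : Matrix (Fin d) (Fin d) ℂ) k j := by
    intro k j; simp [zp, w1, Matrix.one_apply]; split_ifs <;> simp
  have p2 : ∀ k j, zp k (w2 j) = Complex.I * (1 : Matrix (Fin d) (Fin d) ℂ) k j := by
    intro k j; simp [zp, w2, Matrix.one_apply]; split_ifs <;> simp
  have r12 : ∀ k j, zrd L s k (w1 j) z + Complex.I * zrd L s k (w2 j) z = zM L s z k j := by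
    intro k j
    simp only [zrd, b1, b2, q1, q2, zM]
    linear_combination (-(s:ℂ) ^ 2 * (tH L z.2 k j : ℂ) - (1 - (s:ℂ)) ^ 2 *
      (1 : Matrix (Fin d) (Fin d) ℂ) k j) * hI
  have v12 : ∀ k j, zvd L s k (w1 j) z + Complex.I * zvd L s k (w2 j) z = zMs L s z k j := by
    intro k j
    simp only [zvd, b1, b2, q1, q2, zMs]
    linear_combination (-2 * (s:ℂ) * (tH L z.2 k j : ℂ) + 2 * (1 - (s:ℂ)) *
      (1 : Matrix (Fin d) (Fin d) ℂ) k j) * hI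
  have E12 : ∀ j, zEd L s (w1 j) z + Complex.I * zEd L s (w2 j) z =
      - ∑ k, zp k z * zM L s z k j := by
    intro j
    simp only [zEd, ← r12, p1, p2]
    rw [mul_neg, Finset.mul_sum, ← neg_add, ← Finset.sum_add_distrib]
    congr 1
    refine Finset.sum_congr rfl fun k _ => ?_
    linear_combination ((1 : Matrix (Fin d) (Fin d) ℂ) k j * zr L s k z) * hI
  have M1 : ∀ j, zMd L s (w1 j) z = fun k l => (s:ℂ) ^ 2 * (tT L z.1 k l j : ℂ) := by
    intro j; ext k l; simp [zMd, w1]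
  have M2 : ∀ j, zMd L s (w2 j) z = fun k l => (s:ℂ) ^ 2 * (tT L z.2 k l j : ℂ) := by
    intro j; ext k l; simp [zMd, w2]
  have P1 : ∀ k, ∑ j, adjD (zM L s z) (zMd L s (w1 j) z) j k = 0 := by
    intro k
    simp only [M1]
    exact piola (zM L s z) (zM_det_ne hL s z) (fun k l j => (s:ℂ) ^ 2 * (tT L z.1 k l j : ℂ))
      (fun k j l => by simp only [tT_symm z.1 k j l]) k
  have P2 : ∀ k, ∑ j, adjD (zM L s z) (zMd L s (w2 j) z) j k = 0 := by
    intro k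
    simp only [M2]
    exact piola (zM L s z) (zM_det_ne hL s z) (fun k l j => (s:ℂ) ^ 2 * (tT L z.2 k l j : ℂ))
      (fun k j l => by simp only [tT_symm z.2 k j l]) k
  have Y12 : ∑ j, (zYd L s j (w1 j) z + Complex.I * zYd L s j (w2 j) z) =
      detD (zM L s z) (zMs L s z) := by
    have : ∀ j, zYd L s j (w1 j) z + Complex.I * zYd L s j (w2 j) z =
        ∑ k, (adjD (zM L s z) (zMd L s (w1 j) z) j k * zv L s k z +
          Complex.I * zv L s k z * adjD (zM L s z) (zMd L s (w2 j) z) j k) +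
        ∑ k, (zM L s z).adjugate j k * zMs L s z k j := by
      intro j
      simp only [zYd, ← v12]
      rw [Finset.mul_sum, ← Finset.sum_add_distrib, ← Finset.sum_add_distrib]
      refine Finset.sum_congr rfl fun k _ => ?_
      ring
    simp only [this]
    rw [Finset.sum_add_distrib, Finset.sum_comm]
    have h0 : ∀ k, ∑ j, (adjD (zM L s z) (zMd L s (w1 j) z) j k * zv L s k z +
          Complex.I * zv L s k z * adjD (zM L s z) (zMd L s (w2 j) z) j k) = 0 := by
      intro k
      rw [Finset.sum_add_distrib, ← Finset.sum_mul, ← Finset.mul_sum, P1, P2]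
      simp
    simp only [h0, Finset.sum_const_zero, zero_add]
    rfl
  have YE : ∑ j, zY L s j z * (zEd L s (w1 j) z + Complex.I * zEd L s (w2 j) z) =
      (zM L s z).det * (-∑ k, zp k z * zv L s k z) := by
    simp only [E12, zY]
    exact adj_contract (zM L s z) (fun k => zp k z) (fun k => zv L s k z)
  rw [zFs, ← Y12, ← YE, ← Finset.sum_add_distrib]
  refine Finset.sum_congr rfl fun k _ => ?_
  ring

/-! ### Decay estimates -/

lemma exp_neg_tbv_le {d : ℕ} {L : Set (Euc d)} (hL : IsConvexBody L) (x : Euc d) :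
    Real.exp (-⟪tbv L x, x⟫) ≤ volume.real L / tI L (fun _ => 1) x := by
  have h1 := exp_jensen hL (g := fun y => (-1) * ⟪y, x⟫) (by fun_prop) x
  rw [mom_const_mul, ← inner_tbv hL] at h1
  have h2 : tI L (fun y => Real.exp ((-1) * ⟪y, x⟫)) x = volume.real L := by
    unfold tI
    have : ∀ y : Euc d, Real.exp ((-1) * ⟪y, x⟫) * Real.exp ⟪y, x⟫ = 1 := by
      intro y; rw [← Real.exp_add]; simp
    simp only [this]
    simp
  rw [mom, h2] at h1
  simpa using h1

lemma tI_lower {d : ℕ} {L : Set (Euc d)} (hL : IsConvexBody L) (h0 : (∫ x in L, x) = 0)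
    (x : Euc d) {y0 : Euc d} (hy : y0 ∈ L) :
    (2 ^ d : ℝ)⁻¹ * Real.exp (⟪x, y0⟫ / 2) * volume.real L ≤ tI L (fun _ => 1) x := by
  have hm := hL.1.measurableSet
  set F : Euc d → ℝ := L.indicator (fun y => 1 * Real.exp ⟪y, x⟫) with hF
  have hFi : Integrable F := (integrable_indicator_iff hm).2 (tI_integrable hL.1 continuous_const x)
  have e1 : tI L (fun _ => 1) x = ∫ y, F y := (integral_indicator hm).symm
  have hFi2 : Integrable (fun u => F ((1/2 : ℝ) • y0 + u)) := hFi.comp_add_left _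
  have e2 : ∫ u, F ((1/2 : ℝ) • y0 + (1/2 : ℝ) • u) = 2 ^ d * ∫ y, F y := by
    have := Measure.integral_comp_smul (volume : Measure (Euc d))
      (fun u => F ((1/2 : ℝ) • y0 + u)) (1/2)
    rw [this, integral_add_left_eq_self]
    simp
  have hFi3 : Integrable (fun u => F ((1/2 : ℝ) • y0 + (1/2 : ℝ) • u)) :=
    hFi2.comp_smul (by norm_num)
  have h3 : Real.exp (⟪x, y0⟫ / 2) * tI L (fun _ => 1) ((1/2 : ℝ) • x) ≤
      ∫ u, F ((1/2 : ℝ) • y0 + (1/2 : ℝ) • u) := by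
    unfold tI
    rw [← integral_const_mul, ← integral_indicator hm]
    refine integral_mono ((integrable_indicator_iff hm).2
      ((tI_integrable hL.1 continuous_const _).const_mul _)) hFi3 fun u => ?_
    by_cases hu : u ∈ L
    · have : (1/2 : ℝ) • y0 + (1/2 : ℝ) • u ∈ L :=
        hL.2.1 hy hu (by norm_num) (by norm_num) (by norm_num)
      rw [indicator_of_mem hu, hF, indicator_of_mem this, one_mul, one_mul, ← Real.exp_add]
      refine le_of_eq ?_
      congr 1
      rw [inner_add_left, inner_smul_left, inner_smul_left, inner_smul_right, real_inner_comm x y0]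
      simp; ring
    · rw [indicator_of_notMem hu]
      exact indicator_nonneg (fun y _ => by positivity) _
  have h4 := tI_one_ge hL h0 ((1/2 : ℝ) • x)
  have h5 : Real.exp (⟪x, y0⟫ / 2) * volume.real L ≤ 2 ^ d * tI L (fun _ => 1) x := by
    rw [e1, ← e2]
    exact (mul_le_mul_of_nonneg_left h4 (Real.exp_pos _).le).trans h3
  rw [mul_assoc, inv_mul_le_iff₀ (by positivity)]
  exact h5

lemma exp_neg_tbv_le' {d : ℕ} {L : Set (Euc d)} (hL : IsConvexBody L) (h0 : (∫ x in L, x) = 0)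
    (x : Euc d) {y0 : Euc d} (hy : y0 ∈ L) :
    Real.exp (-⟪tbv L x, x⟫) ≤ 2 ^ d * Real.exp (-(⟪x, y0⟫ / 2)) := by
  refine (exp_neg_tbv_le hL x).trans ?_
  rw [div_le_iff₀ (tI_one_pos hL x)]
  have h1 := tI_lower hL h0 x hy
  have h2 : Real.exp (-(⟪x, y0⟫ / 2)) * Real.exp (⟪x, y0⟫ / 2) = 1 := by
    rw [← Real.exp_add]; simp
  have h3 := mul_le_mul_of_nonneg_left h1
    (by positivity : 0 ≤ 2 ^ d * Real.exp (-(⟪x, y0⟫ / 2)))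
  refine le_trans (le_of_eq ?_) h3
  calc volume.real L = (2 ^ d * (2 ^ d : ℝ)⁻¹) * (Real.exp (-(⟪x, y0⟫ / 2)) *
        Real.exp (⟪x, y0⟫ / 2)) * volume.real L := by
        rw [h2, mul_inv_cancel₀ (by positivity)]; ring
    _ = _ := by ring

lemma tbv_inner_nonneg {d : ℕ} {L : Set (Euc d)} (hL : IsConvexBody L) (h0 : (∫ x in L, x) = 0)
    (x : Euc d) : 0 ≤ ⟪tbv L x, x⟫ := by
  have h1 := exp_neg_tbv_le hL x
  have h2 : volume.real L / tI L (fun _ => 1) x ≤ 1 := by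
    rw [div_le_one (tI_one_pos hL x)]; exact tI_one_ge hL h0 x
  have := Real.exp_le_one_iff.1 (h1.trans h2)
  linarith

lemma tbv_inner_lower {d : ℕ} {L : Set (Euc d)} (hL : IsConvexBody L) (h0 : (∫ x in L, x) = 0)
    {ρ : ℝ} (hρ : 0 < ρ) (hb : ∀ x : Euc d, ‖x‖ ≤ ρ → x ∈ L) (x : Euc d) :
    ρ * ‖x‖ / 2 - d * Real.log 2 ≤ ⟪tbv L x, x⟫ := by
  have hmem : (ρ / ‖x‖) • x ∈ L := by
    refine hb _ ?_
    rw [norm_smul, Real.norm_of_nonneg (by positivity)]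
    rcases eq_or_ne ‖x‖ 0 with h | h
    · rw [h]; simp [hρ.le]
    · rw [div_mul_cancel₀ _ h]
  have h1 := exp_neg_tbv_le' hL h0 x hmem
  have e : ⟪x, (ρ / ‖x‖) • x⟫ = ρ * ‖x‖ := by
    rw [inner_smul_right, real_inner_self_eq_norm_sq]
    rcases eq_or_ne ‖x‖ 0 with h | h
    · rw [h]; simp
    · field_simp
  rw [e] at h1
  have e2 : (2:ℝ) ^ d = Real.exp (d * Real.log 2) := by
    rw [Real.exp_nat_mul, Real.exp_log (by norm_num)]
  rw [e2, ← Real.exp_add, Real.exp_le_exp] at h1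
  linarith

lemma zE_re {d : ℕ} (L : Set (Euc d)) (s : ℝ) (z : Euc d × Euc d) :
    (zE L s z).re = -(s ^ 2 * (⟪tbv L z.1, z.1⟫ + ⟪tbv L z.2, z.2⟫) +
      (1 - s) ^ 2 * (‖z.1‖ ^ 2 + ‖z.2‖ ^ 2)) := by
  rw [← real_inner_self_eq_norm_sq, ← real_inner_self_eq_norm_sq]
  simp only [inner_eq_sum, zE, Complex.neg_re, Complex.re_sum]
  congr 1
  rw [← Finset.sum_add_distrib, ← Finset.sum_add_distrib, Finset.mul_sum, Finset.mul_sum,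
    ← Finset.sum_add_distrib]
  refine Finset.sum_congr rfl fun k _ => ?_
  have : zp k z * zr L s k z =
      ((s ^ 2 * (tb L k z.1 * z.1 k + tb L k z.2 * z.2 k) +
        (1 - s) ^ 2 * (z.1 k * z.1 k + z.2 k * z.2 k) : ℝ) : ℂ) +
      ((s ^ 2 * (z.2 k * tb L k z.1 - z.1 k * tb L k z.2) : ℝ) : ℂ) * Complex.I := by
    simp only [zp, zr, zβ, zq]
    push_cast
    linear_combination (-(s:ℂ)^2 * (z.2 k : ℂ) * (tb L k z.2 : ℂ) -
      (1 - (s:ℂ))^2 * (z.2 k : ℂ)^2) * Complex.I_mul_I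
  rw [this, Complex.add_re, Complex.ofReal_re, Complex.re_ofReal_mul, Complex.I_re]
  simp only [tbv]; ring

lemma zE_decay {d : ℕ} {L : Set (Euc d)} (hL : CB0 L) (h0 : (∫ x in L, x) = 0) :
    ∃ δ > 0, ∃ C0 : ℝ, 0 ≤ C0 ∧ ∀ s z, ‖Complex.exp (zE L s z)‖ ≤ C0 * Real.exp (-δ * ‖z‖) := by
  obtain ⟨ρ, hρ, hb⟩ := hL.exists_ball
  have hl2 : 0 ≤ Real.log 2 := Real.log_nonneg (by norm_num)
  refine ⟨min (ρ / 8) (1 / 4), by positivity, Real.exp (d * Real.log 2 + 1), by positivity,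
    fun s z => ?_⟩
  rw [Complex.norm_exp, zE_re, ← Real.exp_add, Real.exp_le_exp]
  set δ := min (ρ / 8) (1 / 4) with hδ
  have hδ1 : δ ≤ ρ / 8 := min_le_left _ _
  have hδ2 : δ ≤ 1 / 4 := min_le_right _ _
  have hδ0 : 0 < δ := by positivity
  have hz : ‖z‖ ≤ ‖z.1‖ + ‖z.2‖ := by
    rw [Prod.norm_def]
    exact max_le (by linarith [norm_nonneg z.2]) (by linarith [norm_nonneg z.1])
  have a1 := tbv_inner_nonneg hL.1 h0 z.1
  have a2 := tbv_inner_nonneg hL.1 h0 z.2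
  have b1 := tbv_inner_lower hL.1 h0 hρ hb z.1
  have b2 := tbv_inner_lower hL.1 h0 hρ hb z.2
  have n1 := norm_nonneg z.1
  have n2 := norm_nonneg z.2
  set X := ⟪tbv L z.1, z.1⟫ + ⟪tbv L z.2, z.2⟫ with hX
  have hdl : 0 ≤ d * Real.log 2 := by positivity
  have hδz : δ * ‖z‖ ≤ δ * (‖z.1‖ + ‖z.2‖) := mul_le_mul_of_nonneg_left hz hδ0.le
  have hY : 0 ≤ ‖z.1‖ ^ 2 + ‖z.2‖ ^ 2 := by positivity
  by_cases hs : 1 / 4 ≤ s ^ 2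
  · have h1 : 1 / 4 * X ≤ s ^ 2 * X := mul_le_mul_of_nonneg_right hs (add_nonneg a1 a2)
    have h2 : 0 ≤ (1 - s) ^ 2 * (‖z.1‖ ^ 2 + ‖z.2‖ ^ 2) := by positivity
    have h3 : δ * (‖z.1‖ + ‖z.2‖) ≤ ρ / 8 * (‖z.1‖ + ‖z.2‖) :=
      mul_le_mul_of_nonneg_right hδ1 (by positivity)
    linarith
  · have hs' : 1 / 4 ≤ (1 - s) ^ 2 := by
      push Not at hs
      have h5 : s < 1 / 2 := by nlinarith
      nlinarith
    have h1 : 0 ≤ s ^ 2 * X := mul_nonneg (by positivity) (add_nonneg a1 a2)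
    have h2 : 1 / 4 * (‖z.1‖ ^ 2 + ‖z.2‖ ^ 2) ≤ (1 - s) ^ 2 * (‖z.1‖ ^ 2 + ‖z.2‖ ^ 2) :=
      mul_le_mul_of_nonneg_right hs' hY
    have h3 : δ * (‖z.1‖ + ‖z.2‖) ≤ 1 / 4 * (‖z.1‖ + ‖z.2‖) :=
      mul_le_mul_of_nonneg_right hδ2 (by positivity)
    nlinarith [sq_nonneg (‖z.1‖ - 1 / 2), sq_nonneg (‖z.2‖ - 1 / 2)]

section growth
variable {d : ℕ} {L : Set (Euc d)}

lemma coord_growth (k : Fin d) (x : Euc d) : |x k| ≤ 1 * (1 + ‖x‖) ^ 1 := by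
  have := PiLp.norm_apply_le x k
  rw [Real.norm_eq_abs] at this
  linarith

lemma tb_cont (hL : IsConvexBody L) (k : Fin d) : Continuous (tb L k) :=
  mom_continuous hL (by fun_prop)

lemma tb_bound (hL : IsConvexBody L) (k : Fin d) :
    ∃ B : ℝ, 0 ≤ B ∧ ∀ x, |tb L k x| ≤ B := mom_bound hL (by fun_prop)

lemma PG.zp (k : Fin d) : PG (fun _ z => zp k z) :=
  (PG.real_fst (g := fun x => x k) (by fun_prop) (coord_growth k)).add
    ((PG.const Complex.I).mul (PG.real_snd (g := fun x => x k) (by fun_prop) (coord_growth k)))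

lemma PG.zq (k : Fin d) : PG (fun _ z => zq k z) :=
  (PG.real_fst (g := fun x => x k) (by fun_prop) (coord_growth k)).sub
    ((PG.const Complex.I).mul (PG.real_snd (g := fun x => x k) (by fun_prop) (coord_growth k)))

/-- A real function with polynomial growth on both factors. -/
def RB (g : Euc d → ℝ) : Prop := Continuous g ∧ ∃ B : ℝ, ∀ x, |g x| ≤ B

lemma RB.fst {g : Euc d → ℝ} (h : RB g) : PG (fun _ (z : Euc d × Euc d) => (g z.1 : ℂ)) := by
  obtain ⟨hc, B, hB⟩ := h
  exact PG.real_fst hc (C := B) (k := 0) (by simpa using hB)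

lemma RB.snd {g : Euc d → ℝ} (h : RB g) : PG (fun _ (z : Euc d × Euc d) => (g z.2 : ℂ)) := by
  obtain ⟨hc, B, hB⟩ := h
  exact PG.real_snd hc (C := B) (k := 0) (by simpa using hB)

lemma RB.add {f g : Euc d → ℝ} (hf : RB f) (hg : RB g) : RB (fun x => f x + g x) := by
  obtain ⟨hc, B, hB⟩ := hf
  obtain ⟨hc', B', hB'⟩ := hg
  exact ⟨hc.add hc', B + B', fun x => (abs_add_le _ _).trans (add_le_add (hB x) (hB' x))⟩

lemma RB.mul {f g : Euc d → ℝ} (hf : RB f) (hg : RB g) : RB (fun x => f x * g x) := by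
  obtain ⟨hc, B, hB⟩ := hf
  obtain ⟨hc', B', hB'⟩ := hg
  refine ⟨hc.mul hc', B * B', fun x => ?_⟩
  rw [abs_mul]
  exact mul_le_mul (hB x) (hB' x) (abs_nonneg _) ((abs_nonneg _).trans (hB x))

lemma RB.const (c : ℝ) : RB (fun _ : Euc d => c) := ⟨continuous_const, |c|, fun _ => le_rfl⟩

lemma RB.neg {f : Euc d → ℝ} (hf : RB f) : RB (fun x => - f x) := by
  simpa using (RB.const (-1)).mul hf

lemma RB.sub {f g : Euc d → ℝ} (hf : RB f) (hg : RB g) : RB (fun x => f x - g x) := by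
  simpa [sub_eq_add_neg] using hf.add hg.neg

lemma RB.sum {ι : Type*} (u : Finset ι) {f : ι → Euc d → ℝ}
    (hf : ∀ i, RB (f i)) : RB (fun x => ∑ i ∈ u, f i x) := by
  classical
  induction u using Finset.induction_on with
  | empty => simpa using RB.const 0
  | insert a u ha ih => simpa [Finset.sum_insert ha] using (hf a).add ih

lemma RB.mom (hL : IsConvexBody L) {g : Euc d → ℝ} (hg : Continuous g) : RB (mom L g) := by
  obtain ⟨B, _, hB⟩ := mom_bound hL hg
  exact ⟨mom_continuous hL hg, B, hB⟩

lemma RB.tb (hL : IsConvexBody L) (k : Fin d) : RB (tb L k) := RB.mom hL (by fun_prop)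

lemma RB.tH (hL : IsConvexBody L) (k j : Fin d) : RB (fun x => tH L x k j) :=
  (RB.mom hL (by fun_prop)).sub ((RB.tb hL k).mul (RB.tb hL j))

lemma RB.tT (hL : IsConvexBody L) (k j l : Fin d) : RB (fun x => tT L x k j l) :=
  ((RB.mom hL (by fun_prop)).sub ((RB.mom hL (by fun_prop)).mul (RB.tb hL l))).sub
    (((RB.tH hL k l).mul (RB.tb hL j)).add ((RB.tb hL k).mul (RB.tH hL j l)))

end growth

/-! ### The conserved integral -/

section growth2
variable {d : ℕ} {L : Set (Euc d)}

lemma PG.zβ (hL : IsConvexBody L) (k : Fin d) : PG (fun _ z => zβ L k z) :=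
  (RB.tb hL k).fst.sub ((PG.const _).mul (RB.tb hL k).snd)

lemma PG.zr (hL : IsConvexBody L) (k : Fin d) : PG (fun s z => zr L s k z) :=
  ((PG.sfun (by fun_prop)).mul (PG.zβ hL k)).add ((PG.sfun (by fun_prop)).mul (PG.zq k))

lemma PG.zv (hL : IsConvexBody L) (k : Fin d) : PG (fun s z => zv L s k z) :=
  ((PG.sfun (by fun_prop)).mul (PG.zβ hL k)).sub ((PG.sfun (by fun_prop)).mul (PG.zq k))

lemma PG.zE (hL : IsConvexBody L) : PG (fun s z => zE L s z) :=
  (PG.sum _ fun k => (PG.zp k).mul (PG.zr hL k)).neg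

lemma PG.zM (hL : IsConvexBody L) (i j : Fin d) : PG (fun s z => zM L s z i j) :=
  ((PG.sfun (by fun_prop)).mul ((RB.tH hL i j).fst.add (RB.tH hL i j).snd)).add
    ((PG.sfun (by fun_prop)).mul (PG.const _))

lemma PG.zMs (hL : IsConvexBody L) (i j : Fin d) : PG (fun s z => zMs L s z i j) :=
  ((PG.sfun (by fun_prop)).mul ((RB.tH hL i j).fst.add (RB.tH hL i j).snd)).sub
    ((PG.sfun (by fun_prop)).mul (PG.const _))

lemma PG.zβd (hL : IsConvexBody L) (k : Fin d) (w : Euc d × Euc d) :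
    PG (fun _ z => zβd L k w z) :=
  (RB.sum _ fun j => (RB.tH hL k j).mul (RB.const (w.1 j))).fst.sub ((PG.const _).mul
    (RB.sum _ fun j => (RB.tH hL k j).mul (RB.const (w.2 j))).snd)

lemma PG.zMd (hL : IsConvexBody L) (w : Euc d × Euc d) (k l : Fin d) :
    PG (fun s z => zMd L s w z k l) :=
  (PG.sfun (by fun_prop)).mul ((RB.sum _ fun j => (RB.tT hL k l j).mul (RB.const (w.1 j))).fst.add
    (RB.sum _ fun j => (RB.tT hL k l j).mul (RB.const (w.2 j))).snd)

lemma PG.zrd (hL : IsConvexBody L) (k : Fin d) (w : Euc d × Euc d) :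
    PG (fun s z => zrd L s k w z) :=
  ((PG.sfun (by fun_prop)).mul (PG.zβd hL k w)).add ((PG.sfun (by fun_prop)).mul (PG.const _))

lemma PG.zvd (hL : IsConvexBody L) (k : Fin d) (w : Euc d × Euc d) :
    PG (fun s z => zvd L s k w z) :=
  ((PG.sfun (by fun_prop)).mul (PG.zβd hL k w)).sub ((PG.sfun (by fun_prop)).mul (PG.const _))

lemma PG.zEd (hL : IsConvexBody L) (w : Euc d × Euc d) : PG (fun s z => zEd L s w z) :=
  (PG.sum _ fun k => ((PG.const _).mul (PG.zr hL k)).add ((PG.zp k).mul (PG.zrd hL k w))).neg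

lemma PG.zY (hL : IsConvexBody L) (j : Fin d) : PG (fun s z => zY L s j z) :=
  PG.sum _ fun k => (PG.adj (PG.zM hL) j k).mul (PG.zv hL k)

lemma PG.zYd (hL : IsConvexBody L) (j : Fin d) (w : Euc d × Euc d) :
    PG (fun s z => zYd L s j w z) :=
  PG.sum _ fun k => ((PG.adjD (PG.zM hL) (PG.zMd hL w) j k).mul (PG.zv hL k)).add
    ((PG.adj (PG.zM hL) j k).mul (PG.zvd hL k w))

lemma PG.zFs (hL : IsConvexBody L) : PG (fun s z => zFs L s z) :=
  (PG.detD (PG.zM hL) (PG.zMs hL)).add ((PG.det (PG.zM hL)).mul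
    (PG.sum _ fun k => (PG.zp k).mul (PG.zv hL k)).neg)

lemma PG.dominated {f : ℝ → Euc d × Euc d → ℂ} (hf : PG f) (hL : CB0 L)
    (h0 : (∫ x in L, x) = 0) : ∃ g : Euc d × Euc d → ℝ, Integrable g ∧
      ∀ s ∈ Icc (-1 : ℝ) 2, ∀ z, ‖f s z * Complex.exp (_root_.zE L s z)‖ ≤ g z := by
  obtain ⟨_, C, k, hC, hb⟩ := hf
  obtain ⟨δ, hδ, C0, hC0, hd⟩ := zE_decay hL h0
  refine ⟨_, integrable_poly_exp (C * C0) k hδ, fun s hs z => ?_⟩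
  rw [norm_mul]
  calc _ ≤ (C * (1 + ‖z‖) ^ k) * (C0 * Real.exp (-δ * ‖z‖)) :=
        mul_le_mul (hb s hs z) (hd s z) (norm_nonneg _) (by positivity)
    _ = _ := by ring

lemma PG.cont_mul_exp {f : ℝ → Euc d × Euc d → ℂ} (hf : PG f) (hL : CB0 L) (s : ℝ) :
    Continuous (fun z => f s z * Complex.exp (_root_.zE L s z)) :=
  (hf.1 s).mul (Complex.continuous_exp.comp ((PG.zE hL.1).1 s))

lemma PG.integrable {f : ℝ → Euc d × Euc d → ℂ} (hf : PG f) (hL : CB0 L)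
    (h0 : (∫ x in L, x) = 0) {s : ℝ} (hs : s ∈ Icc (-1 : ℝ) 2) :
    Integrable (fun z => f s z * Complex.exp (_root_.zE L s z)) := by
  obtain ⟨g, hg, hb⟩ := hf.dominated hL h0
  exact hg.mono' (hf.cont_mul_exp hL s).aestronglyMeasurable
    (Filter.Eventually.of_forall (hb s hs))

lemma zW_integral (hL : CB0 L) (h0 : (∫ x in L, x) = 0) {s : ℝ} (hs : s ∈ Icc (-1 : ℝ) 2)
    (j : Fin d) (w : Euc d × Euc d) :
    ∫ z, (zYd L s j w z + zY L s j z * zEd L s w z) * Complex.exp (zE L s z) = 0 := by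
  have h := integral_bilinear_hasLineDerivAt_right_eq_neg_left_of_integrable
    (μ := (volume : Measure (Euc d × Euc d))) (f := fun _ => (1:ℂ)) (f' := fun _ => (0:ℂ))
    (g := fun z => zY L s j z * Complex.exp (zE L s z))
    (g' := fun z => (zYd L s j w z + zY L s j z * zEd L s w z) * Complex.exp (zE L s z))
    (v := w) (B := ContinuousLinearMap.mul ℝ ℂ) ?_ ?_ ?_ ?_ ?_
  · simpa using h
  · simp
  · simpa using ((PG.zYd hL.1 j w).add ((PG.zY hL.1 j).mul (PG.zEd hL.1 w))).integrable hL h0 hs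
  · simpa using (PG.zY hL.1 j).integrable hL h0 hs
  · intro x _
    exact hasDerivAt_const _ _
  · intro x _
    exact zW_line hL.1 s j x w

lemma zFs_integral (hL : CB0 L) (h0 : (∫ x in L, x) = 0) {s : ℝ} (hs : s ∈ Icc (-1 : ℝ) 2) :
    ∫ z, zFs L s z * Complex.exp (zE L s z) = 0 := by
  have e : (fun z => zFs L s z * Complex.exp (zE L s z)) = fun z =>
      ∑ j, ((zYd L s j (w1 j) z + zY L s j z * zEd L s (w1 j) z) * Complex.exp (zE L s z) +
      Complex.I * ((zYd L s j (w2 j) z + zY L s j z * zEd L s (w2 j) z) *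
        Complex.exp (zE L s z))) := by
    ext z
    rw [← zdiv_identity hL.1, Finset.sum_mul]
    refine Finset.sum_congr rfl fun j _ => ?_
    ring
  have hi : ∀ j w, Integrable fun z =>
      (zYd L s j w z + zY L s j z * zEd L s w z) * Complex.exp (zE L s z) := fun j w =>
    ((PG.zYd hL.1 j w).add ((PG.zY hL.1 j).mul (PG.zEd hL.1 w))).integrable hL h0 hs
  have hi2 : ∀ j ∈ (Finset.univ : Finset (Fin d)), Integrable fun z =>
      ((zYd L s j (w1 j) z + zY L s j z * zEd L s (w1 j) z) * Complex.exp (zE L s z) +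
      Complex.I * ((zYd L s j (w2 j) z + zY L s j z * zEd L s (w2 j) z) *
        Complex.exp (zE L s z))) := fun j _ => (hi j _).add ((hi j _).const_mul _)
  rw [e, integral_finsetSum _ hi2]
  refine Finset.sum_eq_zero fun j _ => ?_
  rw [integral_add (hi j _) ((hi j _).const_mul _), integral_const_mul, zW_integral hL h0 hs,
    zW_integral hL h0 hs]
  simp

/-- The conserved integral. -/
def zInt (L : Set (Euc d)) (s : ℝ) : ℂ := ∫ z, (zM L s z).det * Complex.exp (zE L s z)

lemma zInt_hasDerivAt (hL : CB0 L) (h0 : (∫ x in L, x) = 0) {s : ℝ} (hs : s ∈ Ioo (-1 : ℝ) 2) :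
    HasDerivAt (zInt L) 0 s := by
  obtain ⟨g, hg, hb⟩ := (PG.zFs hL.1).dominated hL h0
  have hdet := PG.det (PG.zM hL.1)
  have h := hasDerivAt_integral_of_dominated_loc_of_deriv_le (𝕜 := ℝ)
    (μ := (volume : Measure (Euc d × Euc d)))
    (F := fun s z => (zM L s z).det * Complex.exp (zE L s z))
    (F' := fun s z => zFs L s z * Complex.exp (zE L s z)) (bound := g)
    (s := Ioo (-1 : ℝ) 2) (x₀ := s) (isOpen_Ioo.mem_nhds hs)
    (Filter.Eventually.of_forall fun t => (hdet.cont_mul_exp hL t).aestronglyMeasurable)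
    (hdet.integrable hL h0 (Ioo_subset_Icc_self hs))
    ((PG.zFs hL.1).cont_mul_exp hL s).aestronglyMeasurable
    (Filter.Eventually.of_forall fun z t ht => hb t (Ioo_subset_Icc_self ht) z) hg
    (Filter.Eventually.of_forall fun z t _ => zF_hasDerivAt L t z)
  have h2 := h.2
  rw [zFs_integral hL h0 (Ioo_subset_Icc_self hs)] at h2
  exact h2

lemma zInt_eq (hL : CB0 L) (h0 : (∫ x in L, x) = 0) : zInt L 1 = zInt L 0 := by
  have hd : ∀ x ∈ Icc (0:ℝ) 1, HasDerivAt (zInt L) 0 x := fun x hx =>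
    zInt_hasDerivAt hL h0 ⟨by linarith [hx.1], by linarith [hx.2]⟩
  exact constant_of_has_deriv_right_zero
    (fun x hx => (hd x hx).continuousAt.continuousWithinAt)
    (fun x hx => (hd x (Ico_subset_Icc_self hx)).hasDerivWithinAt) 1 (by simp)

lemma zInt_zero (L : Set (Euc d)) : zInt L 0 = ((2 * Real.pi) ^ d : ℝ) := by
  have e : ∀ z : Euc d × Euc d, (zM L 0 z).det * Complex.exp (zE L 0 z) =
      (((2:ℝ) ^ d * (Real.exp (-1 * ‖z.1‖ ^ 2) * Real.exp (-1 * ‖z.2‖ ^ 2)) : ℝ) : ℂ) := by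
    intro z
    have h1 : (zM L 0 z).det = (2:ℂ) ^ d := by
      have : zM L 0 z = (2:ℂ) • (1 : Matrix (Fin d) (Fin d) ℂ) := by
        ext i j; simp [zM]
      rw [this, Matrix.det_smul]; simp
    have h2 : zE L 0 z = ((-1 * ‖z.1‖ ^ 2 + -1 * ‖z.2‖ ^ 2 : ℝ) : ℂ) := by
      rw [← real_inner_self_eq_norm_sq, ← real_inner_self_eq_norm_sq]
      simp only [inner_eq_sum, zE, zr, zp, zq]
      push_cast
      rw [← mul_add, ← Finset.sum_add_distrib, neg_one_mul]
      congr 1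
      refine Finset.sum_congr rfl fun k _ => ?_
      linear_combination (-(z.2 k : ℂ)^2) * Complex.I_mul_I
    rw [h1, h2]
    push_cast
    rw [Complex.exp_add]
  unfold zInt
  simp only [e]
  rw [integral_complex_ofReal, integral_const_mul]
  congr 1
  have h3 := integral_prod_mul (μ := (volume : Measure (Euc d))) (ν := (volume : Measure (Euc d)))
    (fun x => Real.exp (-1 * ‖x‖ ^ 2)) (fun x => Real.exp (-1 * ‖x‖ ^ 2))
  have hG0 := GaussianFourier.integral_rexp_neg_mul_sq_norm (V := Euc d) (b := 1) (by norm_num)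
  rw [hG0] at h3
  have h4 : ∫ z : Euc d × Euc d, Real.exp (-1 * ‖z.1‖ ^ 2) * Real.exp (-1 * ‖z.2‖ ^ 2) =
    ∫ z, Real.exp (-1 * ‖z.1‖ ^ 2) * Real.exp (-1 * ‖z.2‖ ^ 2)
      ∂((volume : Measure (Euc d)).prod (volume : Measure (Euc d))) := rfl
  rw [h4, h3, mul_pow]
  congr 1
  simp only [finrank_euclideanSpace, Fintype.card_fin, div_one]
  rw [← Real.rpow_add Real.pi_pos, add_halves, Real.rpow_natCast]

end growth2

lemma volume_real_smul {d : ℕ} {r : ℝ} (hr : 0 ≤ r) (S : Set (Euc d)) :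
    volume.real (r • S) = r ^ d * volume.real S := by
  rw [measureReal_def, Measure.addHaar_smul, ENNReal.toReal_mul, finrank_euclideanSpace,
    Fintype.card_fin, ENNReal.toReal_ofReal (abs_nonneg _), abs_of_nonneg (by positivity)]
  rfl

lemma gauge_polar_le {d : ℕ} {L : Set (Euc d)} (hL : CB0 L) (w : Euc d) :
    ∃ y ∈ L, gauge (polarSet L) w ≤ ⟪w, y⟫ := by
  obtain ⟨y, hy, hmax⟩ := hL.1.1.exists_isMaxOn ⟨0, hL.zero_mem⟩
    (f := fun y => ⟪w, y⟫) (by fun_prop)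
  refine ⟨y, hy, le_of_forall_gt_imp_ge_of_dense fun t ht => ?_⟩
  have h0 : 0 ≤ ⟪w, y⟫ := by simpa using hmax hL.zero_mem
  have ht0 : 0 < t := lt_of_le_of_lt h0 ht
  refine gauge_le_of_mem ht0.le ?_
  rw [mem_smul_set_iff_inv_smul_mem₀ ht0.ne']
  intro x hx
  rw [inner_smul_right, inv_mul_le_iff₀ ht0, real_inner_comm]
  have : ⟪w, x⟫ ≤ ⟪w, y⟫ := hmax hx
  linarith

lemma polar_symm {d : ℕ} {L : Set (Euc d)} (hs : ∀ x ∈ L, -x ∈ L) : ∀ x ∈ polarSet L, -x ∈ polarSet L := by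
  intro x hx y hy
  have := hx _ (hs y hy)
  simpa using this

lemma lintegral_exp_gauge {d : ℕ} {L : Set (Euc d)} (hL : CB0 L) (hs : ∀ x ∈ L, -x ∈ L) :
    ∫⁻ w : Euc d, ENNReal.ofReal (Real.exp (-(gauge L w / 2))) ≤
      ENNReal.ofReal (d.factorial * (2 ^ d * volume.real L)) := by
  have hnhds : L ∈ nhds (0 : Euc d) := mem_interior_iff_mem_nhds.1 hL.2
  have habs : Absorbent ℝ L := absorbent_nhds_zero hnhds
  have hcont := continuous_gauge hL.1.2.1 hnhds
  have hneg : ∀ x, gauge L (-x) = gauge L x := gauge_neg hs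
  have h := measure_lt_one_eq_integral_div_gamma (volume : Measure (Euc d))
    (g := fun x => gauge L x / 2) (by simp) (fun x => by simp [hneg])
    (fun x y => by have := gauge_add_le hL.1.2.1 habs x y; linarith)
    (fun {x} hx => by
      refine (gauge_eq_zero habs ?_).1 (by linarith : gauge L x = 0)
      exact NormedSpace.isVonNBounded_of_isBounded ℝ hL.1.1.isBounded)
    (fun r x => by
      have : gauge L (r • x) = |r| * gauge L x := by
        rcases le_total 0 r with hr | hr
        · rw [gauge_smul_of_nonneg hr, abs_of_nonneg hr, smul_eq_mul]
        · rw [show r • x = (-r) • (-x) by simp, gauge_smul_of_nonneg (by linarith), hneg,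
            abs_of_nonpos hr, smul_eq_mul]
      rw [this]; linarith) (p := 1) one_pos
  simp only [Real.rpow_one, div_one, finrank_euclideanSpace, Fintype.card_fin,
    Real.Gamma_nat_eq_factorial] at h
  have hopen : IsOpen {x : Euc d | gauge L x / 2 < 1} :=
    isOpen_lt (hcont.div_const 2) continuous_const
  have hpos : 0 < volume {x : Euc d | gauge L x / 2 < 1} := hopen.measure_pos _ ⟨0, by simp⟩
  have hint : Integrable (fun w : Euc d => Real.exp (-(gauge L w / 2))) := by
    by_contra hcon
    rw [integral_undef hcon] at h
    simp [h] at hpos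
  have hsub : {x : Euc d | gauge L x / 2 < 1} ⊆ (2:ℝ) • L := by
    intro x hx
    rw [mem_smul_set_iff_inv_smul_mem₀ two_ne_zero]
    have hx' : gauge L x / 2 < 1 := hx
    have h2 : gauge L ((2:ℝ)⁻¹ • x) ≤ 1 := by
      rw [gauge_smul_of_nonneg (by norm_num), smul_eq_mul]; linarith
    rw [gauge_le_one_iff_mem_closure hL.1.2.1 hnhds, hL.1.1.isClosed.closure_eq] at h2
    exact h2
  have hle := measure_mono (μ := (volume : Measure (Euc d))) hsub
  have hfin : volume ((2:ℝ) • L) ≠ ⊤ := (hL.1.1.smul _).measure_lt_top.ne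
  have hle' := ENNReal.toReal_mono hfin hle
  rw [h, ENNReal.toReal_ofReal (by
    refine div_nonneg (integral_nonneg fun x => (Real.exp_pos _).le) (by positivity))] at hle'
  change _ ≤ volume.real _ at hle'
  rw [volume_real_smul (by norm_num)] at hle'
  rw [← ofReal_integral_eq_lintegral_ofReal hint
    (Filter.Eventually.of_forall fun x => (Real.exp_pos _).le)]
  refine ENNReal.ofReal_le_ofReal ?_
  rw [div_le_iff₀ (by positivity)] at hle'
  linarith

lemma tbv_diff_image {d : ℕ} {L : Set (Euc d)} (hL : CB0 L) (hs : ∀ x ∈ L, -x ∈ L) (w : Euc d) :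
    ∫⁻ x : Euc d, ENNReal.ofReal (tH L x + tH L (w - x)).det ≤ volume ((2:ℝ) • L) := by
  have hder : ∀ x ∈ (univ : Set (Euc d)), HasFDerivWithinAt (fun x => tbv L x - tbv L (w - x))
      (Matrix.toEuclideanCLM (𝕜 := ℝ) (tH L x + tH L (w - x))) univ x := by
    intro x _
    rw [hasFDerivWithinAt_univ]
    have h1 := tbv_hasFDerivAt hL.1 x
    have h2 := (tbv_hasFDerivAt hL.1 (w - x)).comp x ((hasFDerivAt_id x).const_sub w)
    refine (h1.sub h2).congr_fderiv ?_
    rw [map_add]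
    ext v
    simp
  have hinj : InjOn (fun x => tbv L x - tbv L (w - x)) univ := by
    intro x _ y _ hxy
    by_contra hne
    have h1 := tbv_mono hL.1 hne
    have h2 := tbv_mono hL.1 (x1 := w - x) (x2 := w - y) (by simpa using hne)
    have h3 : tbv L x - tbv L y = tbv L (w - x) - tbv L (w - y) := by
      have : tbv L x - tbv L (w - x) = tbv L y - tbv L (w - y) := hxy
      rw [sub_eq_sub_iff_add_eq_add] at this ⊢
      rw [this]; abel
    rw [← h3, show w - x - (w - y) = -(x - y) by abel, inner_neg_right] at h2
    linarith
  have h := lintegral_abs_det_fderiv_eq_addHaar_image (volume : Measure (Euc d))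
    MeasurableSet.univ hder hinj
  rw [setLIntegral_univ] at h
  calc _ ≤ ∫⁻ x : Euc d, ENNReal.ofReal |(Matrix.toEuclideanCLM (𝕜 := ℝ)
        (tH L x + tH L (w - x))).det| := by
        refine lintegral_mono fun x => ?_
        rw [det_toECLM]
        exact ENNReal.ofReal_le_ofReal (le_abs_self _)
    _ = _ := h
    _ ≤ _ := by
      refine measure_mono ?_
      rintro _ ⟨x, _, rfl⟩
      rw [mem_smul_set_iff_inv_smul_mem₀ two_ne_zero]
      have := hL.1.2.1 (tbv_mem hL.1 x) (hs _ (tbv_mem hL.1 (w - x)))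
        (by norm_num : (0:ℝ) ≤ 2⁻¹) (by norm_num : (0:ℝ) ≤ 2⁻¹) (by norm_num)
      rw [← smul_add, ← sub_eq_add_neg] at this
      exact this

/-- Bourgain–Milman for symmetric bodies. -/
lemma BM_symm {d : ℕ} {L : Set (Euc d)} (hL : CB0 L) (hs : ∀ x ∈ L, -x ∈ L) :
    (2 * Real.pi) ^ d ≤ 16 ^ d * (d.factorial * volume.real L * volume.real (polarSet L)) := by
  have h0 : (∫ x in L, x) = 0 := symm_centered hs
  have hP := polar_CB0 hL
  have hcontH : ∀ k j, Continuous (fun x => tH L x k j) := fun k j => (RB.tH hL.1 k j).1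
  have hcontb : Continuous (tbv L) := by
    rw [continuous_iff_continuousAt]
    exact fun x => (tbv_hasFDerivAt hL.1 x).continuousAt
  let G : Euc d → Euc d → ℝ := fun x x' =>
    (tH L x + tH L x').det * Real.exp (-(⟪tbv L x, x⟫ + ⟪tbv L x', x'⟫))
  have hdetnn : ∀ x x', 0 ≤ (tH L x + tH L x').det := fun x x' =>
    ((tH_posDef hL.1 x).add (tH_posDef hL.1 x')).det_pos.le
  have hGcont : Continuous (fun z : Euc d × Euc d => G z.1 z.2) := by
    refine Continuous.mul ?_ (by fun_prop)
    refine Continuous.matrix_det ?_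
    refine continuous_matrix fun i j => ?_
    simp only [Matrix.add_apply]
    exact ((hcontH i j).comp continuous_fst).add ((hcontH i j).comp continuous_snd)
  have hnorm : ∀ z : Euc d × Euc d,
      ‖(zM L 1 z).det * Complex.exp (zE L 1 z)‖ₑ = ENNReal.ofReal (G z.1 z.2) := by
    intro z
    rw [← ofReal_norm, norm_mul, Complex.norm_exp, zE_re, zM_det]
    congr 1
    simp only [G]
    rw [Complex.norm_real, Real.norm_eq_abs]
    simp only [one_pow, one_smul, sub_self, ne_eq, OfNat.ofNat_ne_zero, not_false_eq_true,
      zero_pow, mul_zero, zero_smul, add_zero, one_mul, zero_mul]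
    rw [abs_of_nonneg (hdetnn _ _)]
  have hmain : ENNReal.ofReal ((2 * Real.pi) ^ d) ≤
      ∫⁻ z : Euc d × Euc d, ENNReal.ofReal (G z.1 z.2) := by
    have h1 := enorm_integral_le_lintegral_enorm (μ := (volume : Measure (Euc d × Euc d)))
      (fun z => (zM L 1 z).det * Complex.exp (zE L 1 z))
    have h2 : (∫ z, (zM L 1 z).det * Complex.exp (zE L 1 z)) = ((2 * Real.pi) ^ d : ℝ) :=
      (zInt_eq hL h0).trans (zInt_zero L)
    rw [h2] at h1
    simp only [hnorm] at h1
    refine le_trans (le_of_eq ?_) h1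
    rw [← ofReal_norm, Complex.norm_real, Real.norm_of_nonneg (by positivity)]
  have hfub : ∫⁻ z : Euc d × Euc d, ENNReal.ofReal (G z.1 z.2) =
      ∫⁻ w : Euc d, ∫⁻ x : Euc d, ENNReal.ofReal (G x (w - x)) := by
    have e1 := lintegral_prod (μ := (volume : Measure (Euc d))) (ν := (volume : Measure (Euc d)))
      (fun z => ENNReal.ofReal (G z.1 z.2)) (hGcont.measurable.ennreal_ofReal.aemeasurable)
    have e2 : ∀ x : Euc d, ∫⁻ y, ENNReal.ofReal (G x y) = ∫⁻ w, ENNReal.ofReal (G x (w - x)) :=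
      fun x => (lintegral_sub_right_eq_self (fun y => ENNReal.ofReal (G x y)) x).symm
    refine e1.trans ?_
    simp only [e2]
    refine lintegral_lintegral_swap ?_
    refine Measurable.aemeasurable ?_
    have : Continuous (fun z : Euc d × Euc d => G z.1 (z.2 - z.1)) :=
      hGcont.comp (by fun_prop : Continuous fun z : Euc d × Euc d => (z.1, z.2 - z.1))
    exact this.measurable.ennreal_ofReal
  have hw : ∀ w : Euc d, ∫⁻ x : Euc d, ENNReal.ofReal (G x (w - x)) ≤
      ENNReal.ofReal (4 ^ d * Real.exp (-(gauge (polarSet L) w / 2))) * volume ((2:ℝ) • L) := by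
    intro w
    obtain ⟨y, hy, hg⟩ := gauge_polar_le hL w
    calc _ ≤ ∫⁻ x : Euc d, ENNReal.ofReal (4 ^ d * Real.exp (-(gauge (polarSet L) w / 2))) *
          ENNReal.ofReal (tH L x + tH L (w - x)).det := by
          refine lintegral_mono fun x => ?_
          rw [← ENNReal.ofReal_mul (by positivity)]
          refine ENNReal.ofReal_le_ofReal ?_
          simp only [G]
          rw [mul_comm]
          refine mul_le_mul_of_nonneg_right ?_ (hdetnn _ _)
          have h1 := exp_neg_tbv_le' hL.1 h0 x hy
          have h2 := exp_neg_tbv_le' hL.1 h0 (w - x) hy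
          rw [neg_add, Real.exp_add]
          calc _ ≤ (2 ^ d * Real.exp (-(⟪x, y⟫ / 2))) * (2 ^ d * Real.exp (-(⟪w - x, y⟫ / 2))) :=
                mul_le_mul h1 h2 (Real.exp_pos _).le (by positivity)
            _ = 4 ^ d * Real.exp (-(⟪w, y⟫ / 2)) := by
                rw [inner_sub_left, show (4:ℝ) = 2 * 2 by norm_num, mul_pow,
                  show -(⟪w, y⟫ / 2) = -(⟪x, y⟫ / 2) + -((⟪w, y⟫ - ⟪x, y⟫) / 2) by ring, Real.exp_add]
                ring
            _ ≤ _ := by gcongr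
      _ = ENNReal.ofReal (4 ^ d * Real.exp (-(gauge (polarSet L) w / 2))) *
          ∫⁻ x : Euc d, ENNReal.ofReal (tH L x + tH L (w - x)).det :=
          lintegral_const_mul' _ _ ENNReal.ofReal_ne_top
      _ ≤ _ := by gcongr; exact tbv_diff_image hL hs w
  have hfin : volume ((2:ℝ) • L) ≠ ⊤ := (hL.1.1.smul _).measure_lt_top.ne
  have htot : ENNReal.ofReal ((2 * Real.pi) ^ d) ≤
      ENNReal.ofReal (4 ^ d) * ENNReal.ofReal (d.factorial * (2 ^ d * volume.real (polarSet L))) *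
        ENNReal.ofReal (2 ^ d * volume.real L) := by
    refine hmain.trans ?_
    rw [hfub]
    refine (lintegral_mono hw).trans ?_
    rw [lintegral_mul_const' _ _ hfin]
    have e3 : volume ((2:ℝ) • L) = ENNReal.ofReal (2 ^ d * volume.real L) := by
      rw [← volume_real_smul (by norm_num), measureReal_def, ENNReal.ofReal_toReal hfin]
    rw [e3]
    refine mul_le_mul_left ?_ _
    simp only [ENNReal.ofReal_mul (show (0:ℝ) ≤ 4 ^ d by positivity)]
    rw [lintegral_const_mul' _ _ ENNReal.ofReal_ne_top]
    refine mul_le_mul_right (lintegral_exp_gauge hP (polar_symm hs)) _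
  have h1 : 0 ≤ volume.real L := measureReal_nonneg
  have h2 : 0 ≤ volume.real (polarSet L) := measureReal_nonneg
  rw [← ENNReal.ofReal_mul (by positivity), ← ENNReal.ofReal_mul (by positivity),
    ENNReal.ofReal_le_ofReal_iff (by positivity)] at htot
  refine htot.trans (le_of_eq ?_)
  rw [show (16:ℝ) = 4 * 2 * 2 by norm_num, mul_pow, mul_pow]
  ring

lemma Convex.half_add {d : ℕ} {K : Set (Euc d)} (hK : Convex ℝ K) {x y : Euc d} (hx : x ∈ K)
    (hy : y ∈ K) : (2⁻¹ : ℝ) • x + (2⁻¹ : ℝ) • y ∈ K :=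
  hK hx hy (by norm_num) (by norm_num) (by norm_num)

lemma volume_vadd {d : ℕ} (a : Euc d) (S : Set (Euc d)) : volume (a +ᵥ S) = volume S :=
  measure_vadd _ _ _

lemma volume_real_mono {d : ℕ} {S T : Set (Euc d)} (hT : Bornology.IsBounded T) (h : S ⊆ T) :
    volume.real S ≤ volume.real T :=
  measureReal_mono h hT.measure_lt_top.ne

/-- Rogers–Shephard type inequality. -/
lemma RS {d : ℕ} {A B S : Set (Euc d)} (hA : IsCompact A) (hB : IsCompact B) (hAc : Convex ℝ A)
    (hBc : Convex ℝ B) (hSA : S ⊆ A) (hSB : ∀ s ∈ S, -s ∈ B) :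
    volume.real (A + B) * volume.real S ≤ 4 ^ d * (volume.real A * volume.real B) := by
  let f : Euc d → Euc d → ℝ≥0∞ := fun x w => A.indicator 1 x * B.indicator 1 (w - x)
  have hmA := hA.measurableSet
  have hmB := hB.measurableSet
  have hf : Measurable (Function.uncurry f) := by
    refine Measurable.mul ?_ ?_
    · exact (measurable_one.indicator hmA).comp measurable_fst
    · exact (measurable_one.indicator hmB).comp (measurable_snd.sub measurable_fst)
  have h1 : ∫⁻ x, ∫⁻ w, f x w = volume A * volume B := by
    have : ∀ x, ∫⁻ w, f x w = A.indicator 1 x * volume B := by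
      intro x
      simp only [f]
      rw [lintegral_const_mul' _ _ (by
        by_cases hx : x ∈ A <;> simp [hx]),
        lintegral_sub_right_eq_self (fun y => B.indicator 1 y) x, lintegral_indicator_one hmB]
    simp only [this]
    rw [lintegral_mul_const' _ _ hB.measure_lt_top.ne, lintegral_indicator_one hmA]
  rw [lintegral_lintegral_swap hf.aemeasurable] at h1
  have hW : MeasurableSet ((2⁻¹ : ℝ) • (A + B)) := ((hA.add hB).smul _).measurableSet
  have h2 : volume ((2⁻¹ : ℝ) • S) * volume ((2⁻¹ : ℝ) • (A + B)) ≤ volume A * volume B := by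
    rw [← h1, ← setLIntegral_const]
    refine le_trans ?_ (setLIntegral_le_lintegral ((2⁻¹ : ℝ) • (A + B)) _)
    refine setLIntegral_mono' hW ?_
    rintro _ ⟨_, ⟨a, ha, b, hb, rfl⟩, rfl⟩
    have hsub : ((2⁻¹ : ℝ) • a +ᵥ (2⁻¹ : ℝ) • S) ⊆
        A ∩ ((fun x => (2⁻¹ : ℝ) • (a + b) - x) ⁻¹' B) := by
      rintro _ ⟨_, ⟨s, hs, rfl⟩, rfl⟩
      refine ⟨hAc.half_add ha (hSA hs), ?_⟩
      have := hBc.half_add hb (hSB s hs)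
      simp only [mem_preimage, vadd_eq_add]
      convert this using 1
      simp only [smul_add, smul_neg]; abel
    have hmeas : MeasurableSet (A ∩ ((fun x => (2⁻¹ : ℝ) • (a + b) - x) ⁻¹' B)) :=
      hmA.inter (measurable_const.sub measurable_id hmB)
    calc volume ((2⁻¹ : ℝ) • S) = volume ((2⁻¹ : ℝ) • a +ᵥ (2⁻¹ : ℝ) • S) := (volume_vadd _ _).symm
      _ ≤ _ := measure_mono hsub
      _ = ∫⁻ x, (A ∩ ((fun x => (2⁻¹ : ℝ) • (a + b) - x) ⁻¹' B)).indicator 1 x :=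
        (lintegral_indicator_one hmeas).symm
      _ = _ := by
        refine lintegral_congr fun x => ?_
        simp only [f, inter_indicator_one, Pi.mul_apply]
        rfl
  have h3 := ENNReal.toReal_mono (ENNReal.mul_ne_top hA.measure_lt_top.ne hB.measure_lt_top.ne) h2
  rw [ENNReal.toReal_mul, ENNReal.toReal_mul] at h3
  change volume.real _ * volume.real _ ≤ volume.real _ * volume.real _ at h3
  rw [volume_real_smul (by norm_num), volume_real_smul (by norm_num)] at h3
  have e : (2⁻¹ : ℝ) ^ d * (2⁻¹) ^ d * 4 ^ d = 1 := by
    rw [← mul_pow, ← mul_pow]; norm_num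
  calc volume.real (A + B) * volume.real S
      = 4 ^ d * ((2⁻¹) ^ d * volume.real S * ((2⁻¹) ^ d * volume.real (A + B))) := by
        linear_combination (-(volume.real (A + B) * volume.real S)) * e
    _ ≤ _ := by gcongr

/-- Packing lemma. -/
lemma packing {d : ℕ} {U E : Set (Euc d)} (hU : Bornology.IsBounded U) (hE : CB0 E)
    (hs : ∀ x ∈ E, -x ∈ E) : ∃ F : Finset (Euc d), U ⊆ (F : Set (Euc d)) + E ∧
      F.card * volume.real ((2⁻¹ : ℝ) • E) ≤ volume.real (U + (2⁻¹ : ℝ) • E) := by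
  classical
  let Sep : Finset (Euc d) → Prop := fun F => (F : Set (Euc d)) ⊆ U ∧
    ∀ x ∈ F, ∀ y ∈ F, x ≠ y → x - y ∉ E
  have hb : Bornology.IsBounded (U + (2⁻¹ : ℝ) • E) := hU.add (hE.1.1.smul _).isBounded
  have hpos : 0 < volume.real ((2⁻¹ : ℝ) • E) := by
    rw [volume_real_smul (by norm_num)]
    have := hE.1.vol_pos
    positivity
  have hvol : ∀ F, Sep F → F.card * volume.real ((2⁻¹ : ℝ) • E) ≤
      volume.real (U + (2⁻¹ : ℝ) • E) := by
    intro F hF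
    have hmeas : MeasurableSet ((2⁻¹ : ℝ) • E) := (hE.1.1.smul _).measurableSet
    have hd : (F : Set (Euc d)).PairwiseDisjoint (fun x => x +ᵥ (2⁻¹ : ℝ) • E) := by
      intro x hx y hy hxy
      refine disjoint_left.2 ?_
      rintro _ ⟨_, ⟨a, ha, rfl⟩, rfl⟩ ⟨_, ⟨b, hb, rfl⟩, hab⟩
      refine hF.2 x hx y hy hxy ?_
      have := hE.1.2.1.half_add hb (hs a ha)
      convert this using 1
      simp only [vadd_eq_add] at hab
      rw [smul_neg, ← sub_eq_add_neg, sub_eq_sub_iff_add_eq_add, ← hab, add_comm]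
    have h1 := measure_biUnion_finset (μ := (volume : Measure (Euc d))) hd
      (fun x _ => hmeas.const_vadd x)
    simp only [volume_vadd, Finset.sum_const, nsmul_eq_mul] at h1
    have h2 : (⋃ x ∈ F, x +ᵥ (2⁻¹ : ℝ) • E) ⊆ U + (2⁻¹ : ℝ) • E := by
      refine iUnion₂_subset fun x hx => ?_
      rintro _ ⟨e, he, rfl⟩
      exact add_mem_add (hF.1 hx) he
    have h3 := ENNReal.toReal_mono (hb.measure_lt_top (μ := volume)).ne (measure_mono (μ := volume) h2)
    rw [h1, ENNReal.toReal_mul, ENNReal.toReal_natCast] at h3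
    exact h3
  obtain ⟨k, hk⟩ := exists_nat_gt (volume.real (U + (2⁻¹ : ℝ) • E) / volume.real ((2⁻¹ : ℝ) • E))
  have hbd : ∀ F, Sep F → F.card ≤ k := by
    intro F hF
    have h1 := hvol F hF
    rw [← le_div_iff₀ hpos] at h1
    exact_mod_cast (h1.trans hk.le)
  have hex : ∃ n, ∃ F, Sep F ∧ F.card = n := ⟨0, ∅, ⟨by simp, by simp⟩, rfl⟩
  have hne : {n | ∃ F, Sep F ∧ F.card = n}.Nonempty := hex
  have hbdd : BddAbove {n | ∃ F, Sep F ∧ F.card = n} := ⟨k, by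
    rintro _ ⟨F, hF, rfl⟩; exact hbd F hF⟩
  obtain ⟨F, hF, hFc⟩ := Nat.sSup_mem hne hbdd
  refine ⟨F, ?_, hvol F hF⟩
  intro u hu
  by_contra hcon
  have hno : ∀ x ∈ F, u - x ∉ E := fun x hx hE' => hcon ⟨x, hx, u - x, hE', by simp⟩
  have huF : u ∉ F := fun h => hno u h (by simpa using hE.zero_mem)
  have hS : Sep (insert u F) := by
    refine ⟨?_, ?_⟩
    · rw [Finset.coe_insert]; exact insert_subset hu hF.1
    · intro x hx y hy hxy
      rw [Finset.mem_insert] at hx hy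
      rcases hx with rfl | hx <;> rcases hy with rfl | hy
      · exact absurd rfl hxy
      · exact hno y hy
      · intro h; exact hno x hx (by simpa using hs _ h)
      · exact hF.2 x hx y hy hxy
  have := le_csSup hbdd ⟨insert u F, hS, rfl⟩
  rw [Finset.card_insert_of_notMem huF, ← hFc] at this
  omega

lemma cover_volume {d : ℕ} {U E : Set (Euc d)} (F : Finset (Euc d)) (hE : Bornology.IsBounded E)
    (h : U ⊆ (F : Set (Euc d)) + E) : volume.real U ≤ F.card * volume.real E := by
  have h1 : U ⊆ ⋃ x ∈ F, x +ᵥ E := by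
    intro u hu
    obtain ⟨x, hx, e, he, rfl⟩ := h hu
    exact mem_iUnion₂.2 ⟨x, hx, e, he, rfl⟩
  have h2 := (measure_mono h1).trans (measure_biUnion_finset_le (μ := volume) F (fun x => x +ᵥ E))
  simp only [volume_vadd, Finset.sum_const, nsmul_eq_mul] at h2
  have h3 := ENNReal.toReal_mono (ENNReal.mul_ne_top (ENNReal.natCast_ne_top _)
    hE.measure_lt_top.ne) h2
  rw [ENNReal.toReal_mul, ENNReal.toReal_natCast] at h3
  exact h3

lemma CB0.neg {d : ℕ} {K : Set (Euc d)} (h : CB0 K) : CB0 (-K) := by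
  obtain ⟨r, hr, hb⟩ := h.exists_ball
  refine CB0.mk' h.1.1.neg h.1.2.1.neg (zero_mem_interior_of_ball hr fun x hx => ?_)
  exact hb _ (by simpa using hx)

lemma CB0.add {d : ℕ} {K L : Set (Euc d)} (h : CB0 K) (h' : CB0 L) : CB0 (K + L) := by
  obtain ⟨r, hr, hb⟩ := h.exists_ball
  refine CB0.mk' (h.1.1.add h'.1.1) (h.1.2.1.add h'.1.2.1)
    (zero_mem_interior_of_ball hr fun x hx => ?_)
  exact ⟨x, hb x hx, 0, h'.zero_mem, by simp⟩

lemma CB0.sub {d : ℕ} {K L : Set (Euc d)} (h : CB0 K) (h' : CB0 L) : CB0 (K - L) := by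
  rw [sub_eq_add_neg]; exact h.add h'.neg

lemma CB0.inter {d : ℕ} {K L : Set (Euc d)} (h : CB0 K) (h' : CB0 L) : CB0 (K ∩ L) := by
  refine CB0.mk' (h.1.1.inter h'.1.1) (h.1.2.1.inter h'.1.2.1) ?_
  rw [interior_inter]; exact ⟨h.2, h'.2⟩

lemma CB0.smul {d : ℕ} {K : Set (Euc d)} (h : CB0 K) {r : ℝ} (hr : 0 < r) : CB0 (r • K) := by
  obtain ⟨s, hs, hb⟩ := h.exists_ball
  refine CB0.mk' (h.1.1.smul r) (h.1.2.1.smul r)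
    (zero_mem_interior_of_ball (mul_pos hr hs) fun x hx => ?_)
  rw [mem_smul_set_iff_inv_smul_mem₀ hr.ne']
  refine hb _ ?_
  rw [norm_smul, norm_inv, Real.norm_of_nonneg hr.le, inv_mul_le_iff₀ hr]
  exact hx

lemma sub_symm {d : ℕ} (K : Set (Euc d)) : ∀ x ∈ K - K, -x ∈ K - K := by
  rintro _ ⟨a, ha, b, hb, rfl⟩
  exact ⟨b, hb, a, ha, by simp⟩

lemma inter_symm {d : ℕ} (K : Set (Euc d)) : ∀ x ∈ K ∩ -K, -x ∈ K ∩ -K := by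
  rintro x ⟨h1, h2⟩
  exact ⟨h2, by simpa using h1⟩

lemma CB0.subset_sub {d : ℕ} {K : Set (Euc d)} (h : CB0 K) : K ⊆ K - K :=
  fun x hx => ⟨x, hx, 0, h.zero_mem, by simp⟩

lemma CB0.neg_subset_sub {d : ℕ} {K : Set (Euc d)} (h : CB0 K) : -K ⊆ K - K :=
  fun x hx => ⟨0, h.zero_mem, -x, hx, by simp⟩

/-- Bodies whose difference body is comparable with their symmetric core. -/
def GoodB {d : ℕ} (c : ℝ) (K : Set (Euc d)) : Prop :=
  CB0 K ∧ volume.real (K - K) ≤ c ^ d * volume.real (K ∩ -K)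

lemma GoodB.mono {d : ℕ} {c c' : ℝ} {K : Set (Euc d)} (h : GoodB c K) (hc : 0 ≤ c) (hcc : c ≤ c') :
    GoodB c' K := by
  refine ⟨h.1, h.2.trans ?_⟩
  have : 0 ≤ volume.real (K ∩ -K) := measureReal_nonneg
  gcongr

lemma GoodB.smul {d : ℕ} {c : ℝ} {K : Set (Euc d)} (h : GoodB c K) {r : ℝ} (hr : 0 < r)
    (hc : 0 ≤ c) : GoodB c (r • K) := by
  refine ⟨h.1.smul hr, ?_⟩
  have h1 : r • K - r • K ⊆ r • (K - K) := by
    rintro _ ⟨_, ⟨a, ha, rfl⟩, _, ⟨b, hb, rfl⟩, rfl⟩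
    exact ⟨a - b, ⟨a, ha, b, hb, rfl⟩, smul_sub _ _ _⟩
  have h2 : r • (K ∩ -K) ⊆ r • K ∩ -(r • K) := by
    rintro _ ⟨a, ⟨ha, ha'⟩, rfl⟩
    exact ⟨⟨a, ha, rfl⟩, ⟨-a, ha', by simp⟩⟩
  have h3 := volume_real_mono ((h.1.sub h.1).smul hr).1.1.isBounded h1
  have h4 := volume_real_mono ((h.1.smul hr).inter (h.1.smul hr).neg).1.1.isBounded h2
  rw [volume_real_smul hr.le] at h3 h4
  calc _ ≤ _ := h3
    _ ≤ r ^ d * (c ^ d * volume.real (K ∩ -K)) := by gcongr; exact h.2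
    _ = c ^ d * (r ^ d * volume.real (K ∩ -K)) := by ring
    _ ≤ _ := by gcongr

lemma RS_diff {d : ℕ} {K : Set (Euc d)} (h : CB0 K) :
    volume.real (K - K) ≤ 4 ^ d * volume.real K := by
  have h1 := RS h.1.1 h.neg.1.1 h.1.2.1 h.neg.1.2.1 (S := K) subset_rfl (fun s hs => by simpa using hs)
  have h2 := h.1.vol_pos
  have h3 : volume.real (-K) = volume.real K := by
    simp [measureReal_def]
  rw [h3, ← sub_eq_add_neg, ← mul_assoc] at h1
  exact le_of_mul_le_mul_right h1 h2

lemma GoodB.of_centered {d : ℕ} {K : Set (Euc d)} (hK : IsConvexBody K)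
    (h0 : (∫ x in K, x) = 0) : GoodB (256 * Real.exp 3) K := by
  have h := centered_zero_mem hK h0
  refine ⟨h, ?_⟩
  have hP := polar_CB0 h
  have hL := hP.sub hP
  have hBM := BM_symm hL (sub_symm _)
  have hBS := BS_fact hK h0
  have hsub : polarSet (polarSet K - polarSet K) ⊆ K ∩ -K := by
    intro y hy
    constructor
    · rw [← polar_polar h]
      exact fun u hu => hy u (hP.subset_sub hu)
    · rw [mem_neg, ← polar_polar h]
      intro u hu
      have := hy (-u) (hP.neg_subset_sub (by simpa using hu))
      simpa using this
  have hv := volume_real_mono (h.inter h.neg).1.1.isBounded hsub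
  have hR := RS_diff h
  have hR' := RS_diff hP
  set a := volume.real K
  set b := volume.real (polarSet K)
  set e := volume.real (K ∩ -K)
  have ha : 0 ≤ a := measureReal_nonneg
  have hb : 0 ≤ b := measureReal_nonneg
  have he : 0 ≤ e := measureReal_nonneg
  have hpi : 0 < (2 * Real.pi) ^ d := by positivity
  refine le_of_mul_le_mul_left ?_ hpi
  have e1 : (2 * Real.pi * Real.exp 3) ^ d = (2 * Real.pi) ^ d * Real.exp 3 ^ d := mul_pow _ _ _
  calc (2 * Real.pi) ^ d * volume.real (K - K) ≤
      (16 ^ d * (d.factorial * (4 ^ d * b) * e)) * (4 ^ d * a) := by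
        refine mul_le_mul (hBM.trans ?_) hR measureReal_nonneg (by positivity)
        gcongr
    _ = (16 ^ d * 4 ^ d * 4 ^ d) * (d.factorial * a * b) * e := by ring
    _ ≤ (16 ^ d * 4 ^ d * 4 ^ d) * ((2 * Real.pi * Real.exp 3) ^ d) * e := by gcongr
    _ = _ := by
      have e2 : (256:ℝ) ^ d = 16 ^ d * 4 ^ d * 4 ^ d := by
        rw [← mul_pow, ← mul_pow]; norm_num
      rw [e1, mul_pow 256, e2]; ring

lemma GoodB.polar {d : ℕ} {c : ℝ} (hc : 0 ≤ c) {K : Set (Euc d)} (h : GoodB c K) :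
    GoodB (32 * Real.exp 3 * c) (polarSet K) := by
  obtain ⟨h, hv⟩ := h
  have hP := polar_CB0 h
  refine ⟨hP, ?_⟩
  have h0 := h.inter h.neg
  have h1 := h.sub h
  have hBS := BS_fact h0.1 (symm_centered (inter_symm K))
  have hBM := BM_symm h1 (sub_symm K)
  have hs1 : polarSet K - polarSet K ⊆ (2:ℝ) • polarSet (K ∩ -K) := by
    rintro _ ⟨u, hu, v, hv, rfl⟩
    rw [mem_smul_set_iff_inv_smul_mem₀ two_ne_zero]
    rintro x ⟨hx, hx'⟩
    have e1 := hu x hx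
    have e2 := hv (-x) hx'
    rw [inner_neg_left] at e2
    simp only [inner_smul_right, inner_sub_right]
    linarith
  have hs2 : polarSet (K - K) ⊆ polarSet K ∩ -polarSet K := by
    intro y hy
    refine ⟨fun x hx => hy x (h.subset_sub hx), fun x hx => ?_⟩
    have := hy (-x) (h.neg_subset_sub (by simpa using hx))
    simpa using this
  have hv1 := volume_real_mono ((polar_CB0 h0).smul two_pos).1.1.isBounded hs1
  have hv2 := volume_real_mono (hP.inter hP.neg).1.1.isBounded hs2
  rw [volume_real_smul two_pos.le] at hv1
  set a := volume.real (K ∩ -K)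
  set b := volume.real (polarSet (K ∩ -K))
  set e := volume.real (polarSet K ∩ -polarSet K)
  set f := volume.real (K - K)
  have ha : 0 < a := h0.1.vol_pos
  have hf : 0 < f := h1.1.vol_pos
  have hb : 0 ≤ b := measureReal_nonneg
  have he : 0 ≤ e := measureReal_nonneg
  have hd : (0:ℝ) < d.factorial := by positivity
  have hpi : 0 < (2 * Real.pi) ^ d := by positivity
  refine le_of_mul_le_mul_left ?_ hpi
  calc (2 * Real.pi) ^ d * volume.real (polarSet K - polarSet K) ≤
      (16 ^ d * (d.factorial * f * e)) * (2 ^ d * b) := by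
        refine mul_le_mul (hBM.trans ?_) hv1 measureReal_nonneg (by positivity)
        gcongr
    _ ≤ (16 ^ d * (d.factorial * (c ^ d * a) * e)) * (2 ^ d * b) := by gcongr
    _ = (16 ^ d * 2 ^ d) * c ^ d * (d.factorial * a * b) * e := by ring
    _ ≤ (16 ^ d * 2 ^ d) * c ^ d * ((2 * Real.pi * Real.exp 3) ^ d) * e := by gcongr
    _ = _ := by
      have e2 : (32:ℝ) ^ d = 16 ^ d * 2 ^ d := by
        rw [← mul_pow]; norm_num
      rw [mul_pow _ (Real.exp 3), mul_pow _ c, mul_pow 32, e2]; ring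

lemma GoodB.neg_mem {d : ℕ} (hd : 1 ≤ d) {c : ℝ} (hc : 1 ≤ c) {K : Set (Euc d)} (h : GoodB c K)
    {x : Euc d} (hx : x ∈ K) : -x ∈ (2 * d * c ^ d : ℝ) • K := by
  obtain ⟨h, hv⟩ := h
  set M : ℝ := 2 * d * c ^ d with hM
  have hd' : (1:ℝ) ≤ d := by exact_mod_cast hd
  have hcd : 1 ≤ c ^ d := one_le_pow₀ hc
  have hM1 : 1 ≤ M := by rw [hM]; nlinarith
  rw [mem_smul_set_iff_inv_smul_mem₀ (by positivity)]
  by_contra hcon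
  obtain ⟨u, t, h1, h2⟩ := exists_sep h.1.2.1 h.1.1.isClosed hcon
  have ht : 0 < t := by simpa using h1 0 h.zero_mem
  rw [smul_neg, inner_neg_left, inner_smul_left] at h2
  simp only [conj_trivial] at h2
  have h2' : ⟪x, u⟫ < -(M * t) := by
    have h4 : M * (M⁻¹ * ⟪x, u⟫) = ⟪x, u⟫ := by field_simp
    nlinarith
  set s : ℝ := 2 / (1 + M) with hs
  have hs0 : 0 < s := by positivity
  have hs1 : s ≤ 1 := by rw [hs, div_le_one (by positivity)]; linarith
  have hsM : s * (1 + M) = 2 := by rw [hs]; field_simp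
  have hTK : (s • x +ᵥ (1 - s) • K) ⊆ K := by
    rintro _ ⟨_, ⟨k, hk, rfl⟩, rfl⟩
    exact h.1.2.1 hx hk hs0.le (by linarith) (by ring)
  have hdisj : Disjoint (s • x +ᵥ (1 - s) • K) (K ∩ -K) := by
    refine disjoint_left.2 ?_
    rintro _ ⟨_, ⟨k, hk, rfl⟩, rfl⟩ ⟨_, hk'⟩
    have e1 := h1 _ hk'
    have e2 := h1 k hk
    simp only [vadd_eq_add, inner_neg_left, inner_add_left, inner_smul_left, conj_trivial] at e1
    have e3 : (1 - s) * ⟪k, u⟫ ≤ (1 - s) * t := mul_le_mul_of_nonneg_left e2.le (by linarith)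
    have e4 : s * ⟪x, u⟫ < s * -(M * t) := mul_lt_mul_of_pos_left h2' hs0
    have e5 : s * (1 + M) * t = 2 * t := by rw [hsM]
    nlinarith
  have hm : MeasurableSet (K ∩ -K) := (h.inter h.neg).1.1.measurableSet
  have hun := measureReal_union (μ := (volume : Measure (Euc d))) hdisj hm
    (((h.1.1.smul (1 - s)).vadd (s • x)).measure_lt_top.ne) (h.inter h.neg).1.1.measure_lt_top.ne
  have hle := volume_real_mono h.1.1.isBounded (union_subset hTK (inter_subset_left (t := -K)))
  rw [hun] at hle
  have e6 : volume.real (s • x +ᵥ (1 - s) • K) = (1 - s) ^ d * volume.real K := by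
    rw [measureReal_def, volume_vadd, ← measureReal_def, volume_real_smul (by linarith)]
  rw [e6] at hle
  have hbern : 1 - d * s ≤ (1 - s) ^ d := by
    have := one_add_mul_le_pow (a := -s) (by linarith) d
    rw [← sub_eq_add_neg] at this; linarith
  have hKK := volume_real_mono (h.sub h).1.1.isBounded h.subset_sub
  have hK0 : 0 < volume.real K := h.1.vol_pos
  have h00 : 0 < volume.real (K ∩ -K) := (h.inter h.neg).1.vol_pos
  have f1 : volume.real (K ∩ -K) ≤ d * s * volume.real K := by nlinarith
  have f2 : volume.real (K ∩ -K) ≤ d * s * (c ^ d * volume.real (K ∩ -K)) :=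
    f1.trans (mul_le_mul_of_nonneg_left (hKK.trans hv) (by positivity))
  have f3 : 1 ≤ d * s * c ^ d := by
    by_contra hh
    push Not at hh
    nlinarith
  have f4 : s * (1 + M) = 2 * (d * s * c ^ d) + s := by rw [hM]; ring
  linarith

lemma CB0.nhds {d : ℕ} {K : Set (Euc d)} (h : CB0 K) : K ∈ nhds (0 : Euc d) :=
  mem_interior_iff_mem_nhds.1 h.2

lemma CB0.gauge_le_one {d : ℕ} {K : Set (Euc d)} (h : CB0 K) {x : Euc d} :
    gauge K x ≤ 1 ↔ x ∈ K := by
  rw [gauge_le_one_iff_mem_closure h.1.2.1 h.nhds, h.1.1.isClosed.closure_eq]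

lemma CB0.gauge_eq_one {d : ℕ} {K : Set (Euc d)} (h : CB0 K) {x : Euc d} :
    gauge K x = 1 ↔ x ∈ frontier K :=
  gauge_eq_one_iff_mem_frontier h.1.2.1 h.nhds

lemma CB0.gauge_cont {d : ℕ} {K : Set (Euc d)} (h : CB0 K) : Continuous (gauge K) :=
  continuous_gauge h.1.2.1 h.nhds

lemma CB0.gauge_sub {d : ℕ} {K : Set (Euc d)} (h : CB0 K) (x y : Euc d) :
    gauge K (x + y) ≤ gauge K x + gauge K y :=
  gauge_add_le h.1.2.1 (absorbent_nhds_zero h.nhds) x y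

/-- From a cover of the boundary to a cover of the body. -/
lemma fill {d : ℕ} {A B : Set (Euc d)} (hA : CB0 A) (hB : CB0 B) {M r : ℝ} (hM : 0 ≤ M)
    (hr : 0 < r) {p : Euc d} (hp : p ∈ B) (hrp : r • p ∈ frontier A)
    (hneg : ∀ x ∈ A, -x ∈ M • A) (F0 : Finset (Euc d)) (hF0 : frontier A ⊆ (F0 : Set (Euc d)) + B) :
    ∃ F : Finset (Euc d), A ⊆ (F : Set (Euc d)) + (2:ℝ) • B ∧
      (F.card : ℝ) ≤ ((2 + M) * r + 1) * F0.card := by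
  classical
  set T : ℝ := (2 + M) * r with hT
  have hT0 : 0 ≤ T := by positivity
  refine ⟨Finset.image (fun q : Euc d × ℕ => q.1 + (q.2 : ℝ) • p)
    (F0 ×ˢ Finset.range (⌊T⌋₊ + 1)), ?_, ?_⟩
  · intro a ha
    have hcont : Continuous (fun t : ℝ => gauge A (a - t • p)) :=
      hA.gauge_cont.comp (by fun_prop)
    have h0 : gauge A (a - (0:ℝ) • p) ≤ 1 := by simpa using hA.gauge_le_one.2 ha
    have h1 : 1 ≤ gauge A (a - T • p) := by
      by_contra hcon
      push Not at hcon
      have hb := hA.gauge_le_one.1 hcon.le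
      have h2 := gauge_le_of_mem hM (hneg _ hb)
      have h3 := hA.gauge_sub a (-(a - T • p))
      have h4 : a + -(a - T • p) = (2 + M) • (r • p) := by rw [smul_smul]; abel
      rw [h4, gauge_smul_of_nonneg (by positivity), hA.gauge_eq_one.2 hrp, smul_eq_mul] at h3
      have h5 := hA.gauge_le_one.2 ha
      linarith
    obtain ⟨t, ht, htt⟩ := intermediate_value_Icc hT0 hcont.continuousOn ⟨h0, h1⟩
    obtain ⟨f, hf, q, hq, hfq⟩ := hF0 (hA.gauge_eq_one.1 htt)
    refine ⟨f + (⌊t⌋₊ : ℝ) • p, ?_, q + (t - ⌊t⌋₊) • p, ?_, ?_⟩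
    · rw [Finset.mem_coe, Finset.mem_image]
      refine ⟨(f, ⌊t⌋₊), ?_, rfl⟩
      rw [Finset.mem_product, Finset.mem_range]
      exact ⟨hf, Nat.lt_succ_of_le (Nat.floor_le_floor ht.2)⟩
    · rw [mem_smul_set_iff_inv_smul_mem₀ two_ne_zero, smul_add]
      refine hB.1.2.1.half_add hq ?_
      have h6 := Nat.floor_le ht.1
      have h7 := Nat.lt_floor_add_one t
      have := hB.1.2.1 hB.zero_mem hp
        (show (0:ℝ) ≤ 1 - (t - (⌊t⌋₊ : ℝ)) by linarith)
        (show (0:ℝ) ≤ t - (⌊t⌋₊ : ℝ) by linarith) (by ring)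
      simpa using this
    · have hfq' : f + q = a - t • p := hfq
      have : a = f + q + t • p := by rw [hfq']; abel
      rw [this]
      simp only [sub_smul]; abel
  · have h1 : (Finset.image (fun q : Euc d × ℕ => q.1 + (q.2 : ℝ) • p)
      (F0 ×ˢ Finset.range (⌊T⌋₊ + 1))).card ≤ F0.card * (⌊T⌋₊ + 1) := by
      refine Finset.card_image_le.trans ?_
      rw [Finset.card_product, Finset.card_range]
    calc _ ≤ ((F0.card * (⌊T⌋₊ + 1) : ℕ) : ℝ) := by exact_mod_cast h1
      _ = ((⌊T⌋₊ : ℝ) + 1) * F0.card := by push_cast; ring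
      _ ≤ _ := by
        have := Nat.floor_le hT0
        gcongr

lemma pow_diff_le {ε : ℝ} (h0 : 0 ≤ ε) (h1 : ε ≤ 1) (d : ℕ) :
    (1 + ε) ^ d - (1 - ε) ^ d ≤ 4 ^ d * ε := by
  induction d with
  | zero => simpa using h0
  | succ n ih =>
    have e1 : (1 + ε) ^ n ≤ 4 ^ n := pow_le_pow_left₀ (by linarith) (by linarith) n
    have e2 : (1 - ε) ^ n ≤ 4 ^ n := pow_le_pow_left₀ (by linarith) (by linarith) n
    have e3 : 0 ≤ (4:ℝ) ^ n * ε := by positivity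
    have e4 : ε * ((1 + ε) ^ n + (1 - ε) ^ n) ≤ ε * (4 ^ n + 4 ^ n) :=
      mul_le_mul_of_nonneg_left (by linarith) h0
    calc (1 + ε) ^ (n + 1) - (1 - ε) ^ (n + 1) =
        ((1 + ε) ^ n - (1 - ε) ^ n) + ε * ((1 + ε) ^ n + (1 - ε) ^ n) := by ring
      _ ≤ 4 ^ n * ε + ε * (4 ^ n + 4 ^ n) := by linarith
      _ ≤ 4 ^ (n + 1) * ε := by rw [pow_succ]; linarith

/-- Volume of a thin neighbourhood of the boundary. -/
lemma shell_volume {d : ℕ} {C : Set (Euc d)} (hC : CB0 C) {ε : ℝ} (h0 : 0 < ε) (h1 : ε < 1) :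
    volume.real (frontier C + ε • (C ∩ -C)) ≤ 4 ^ d * ε * volume.real C := by
  have hsub : frontier C + ε • (C ∩ -C) ⊆ ((1 + ε) • C) \ interior ((1 - ε) • C) := by
    rintro _ ⟨a, ha, _, ⟨z, ⟨hz, hz'⟩, rfl⟩, rfl⟩
    refine ⟨?_, ?_⟩
    · rw [hC.1.2.1.add_smul zero_le_one h0.le, one_smul]
      exact ⟨a, hC.1.1.isClosed.frontier_subset ha, ε • z, ⟨z, hz, rfl⟩, rfl⟩
    · intro hi
      have h2 : interior ((1 - ε) • C) + ε • C ⊆ C := by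
        have : C = (1 - ε) • C + ε • C := by
          rw [← hC.1.2.1.add_smul (by linarith) h0.le]; simp
        conv_rhs => rw [this]
        exact add_subset_add_right interior_subset
      have h3 : IsOpen (interior ((1 - ε) • C) + ε • C) := isOpen_interior.add_right
      have h4 : a ∈ interior C := by
        refine mem_interior.2 ⟨_, h2, h3, ?_⟩
        exact ⟨_, hi, ε • (-z), ⟨-z, hz', rfl⟩, by simp⟩
      exact ha.2 h4
  have hb1 := (hC.smul (show 0 < 1 + ε by linarith))
  have hb2 := (hC.smul (show 0 < 1 - ε by linarith))
  have hv := volume_real_mono (hb1.1.1.isBounded.subset sdiff_subset) hsub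
  have hsub2 : interior ((1 - ε) • C) ⊆ (1 + ε) • C := by
    refine interior_subset.trans ?_
    rintro _ ⟨z, hz, rfl⟩
    rw [mem_smul_set_iff_inv_smul_mem₀ (by linarith)]
    simp only [smul_smul]
    refine hC.1.2.1.smul_mem_of_zero_mem hC.zero_mem hz ⟨?_, ?_⟩
    · exact mul_nonneg (inv_nonneg.2 (by linarith)) (by linarith)
    · rw [inv_mul_le_one₀ (by linarith)]; linarith
  have e1 : volume.real (interior ((1 - ε) • C)) = (1 - ε) ^ d * volume.real C := by
    rw [← volume_real_smul (by linarith), measureReal_def, measureReal_def]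
    congr 1
    exact measure_interior_of_null_frontier (hb2.1.2.1.addHaar_frontier volume)
  rw [measureReal_sdiff hsub2 measurableSet_interior (hb1.1.1.measure_lt_top.ne), e1,
    volume_real_smul (by linarith)] at hv
  have h5 := pow_diff_le h0.le h1.le d
  have h6 : 0 ≤ volume.real C := measureReal_nonneg
  nlinarith

/-- The dual volume comparison. -/
lemma lemC {d : ℕ} {c : ℝ} (hc : 1 ≤ c) {C D : Set (Euc d)} (hC : GoodB c C) (hD : GoodB c D)
    (F : Finset (Euc d)) (hF : polarSet D ⊆ (F : Set (Euc d)) + (2:ℝ) • polarSet C) :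
    volume.real ((C - C) + (D - D)) ≤
      (192 * Real.exp 3 * c ^ 2) ^ d * F.card * volume.real (D ∩ -D) := by
  have hc0 : 0 ≤ c := by linarith
  obtain ⟨hC, hCv⟩ := hC
  obtain ⟨hD, hDv⟩ := hD
  have hC1 := hC.sub hC
  have hD1 := hD.sub hD
  have hI := hC1.inter hD1
  have hIs : ∀ x ∈ (C - C) ∩ (D - D), -x ∈ (C - C) ∩ (D - D) := fun x hx =>
    ⟨sub_symm C x hx.1, sub_symm D x hx.2⟩
  have hRS := RS hC1.1.1 hD1.1.1 hC1.1.2.1 hD1.1.2.1 (S := (C - C) ∩ (D - D)) inter_subset_left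
    (fun s hs => sub_symm D s hs.2)
  have hBM := BM_symm hI hIs
  have hPC := polar_CB0 hC
  have hPD := polar_CB0 hD
  have hX := hPD.add hPC
  have hpol : polarSet ((C - C) ∩ (D - D)) ⊆ polarSet D + polarSet C := by
    rw [← polar_polar hX]
    refine polar_anti ?_
    intro y hy
    constructor
    · refine hC.subset_sub ?_
      rw [← polar_polar hC]
      exact fun u hu => hy u ⟨0, hPD.zero_mem, u, hu, by simp⟩
    · refine hD.subset_sub ?_
      rw [← polar_polar hD]
      exact fun u hu => hy u ⟨u, hu, 0, hPC.zero_mem, by simp⟩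
  have hcov : polarSet D + polarSet C ⊆ (F : Set (Euc d)) + (3:ℝ) • polarSet C := by
    rintro _ ⟨u, hu, v, hv, rfl⟩
    obtain ⟨f, hf, w, hw, rfl⟩ := hF hu
    refine ⟨f, hf, w + v, ?_, by simp [add_assoc]⟩
    rw [show (3:ℝ) = 2 + 1 by norm_num, hPC.1.2.1.add_smul two_pos.le zero_le_one, one_smul]
    exact ⟨w, hw, v, hv, rfl⟩
  have hv1 := volume_real_mono hX.1.1.isBounded hpol
  have hv2 := cover_volume F (hPC.smul three_pos).1.1.isBounded hcov
  rw [volume_real_smul three_pos.le] at hv2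
  have h0 := hC.inter hC.neg
  have hBS := BS_fact h0.1 (symm_centered (inter_symm C))
  have hv3 := volume_real_mono (polar_CB0 h0).1.1.isBounded
    (polar_anti (inter_subset_left : C ∩ -C ⊆ C))
  set c1 := volume.real (C - C)
  set d1 := volume.real (D - D)
  set i := volume.real ((C - C) ∩ (D - D)) with hi
  set j := volume.real (polarSet ((C - C) ∩ (D - D)))
  set pc := volume.real (polarSet C)
  set c0 := volume.real (C ∩ -C)
  set d0 := volume.real (D ∩ -D)
  set p0 := volume.real (polarSet (C ∩ -C))
  set S := volume.real ((C - C) + (D - D))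
  have hip : 0 < i := hI.1.vol_pos
  have hc0n : 0 ≤ c0 := measureReal_nonneg
  have hd0n : 0 ≤ d0 := measureReal_nonneg
  have hpcn : 0 ≤ pc := measureReal_nonneg
  have hd1n : 0 ≤ d1 := measureReal_nonneg
  have hc1n : 0 ≤ c1 := measureReal_nonneg
  have hp0n : 0 ≤ p0 := measureReal_nonneg
  have hSn : 0 ≤ S := measureReal_nonneg
  have hj : j ≤ F.card * (3 ^ d * pc) := hv1.trans hv2
  have hpi : 0 < (2 * Real.pi) ^ d := by positivity
  refine le_of_mul_le_mul_left ?_ hpi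
  refine le_of_mul_le_mul_right ?_ hip
  calc (2 * Real.pi) ^ d * S * i = (2 * Real.pi) ^ d * (S * i) := by ring
    _ ≤ (16 ^ d * (d.factorial * i * (F.card * (3 ^ d * pc)))) * (4 ^ d * ((c ^ d * c0) * (c ^ d * d0))) := by
        refine mul_le_mul (hBM.trans ?_) (hRS.trans ?_) (by positivity) (by positivity)
        · gcongr
        · gcongr
    _ ≤ (16 ^ d * (d.factorial * i * (F.card * (3 ^ d * p0)))) * (4 ^ d * ((c ^ d * c0) * (c ^ d * d0))) := by
        gcongr
    _ = (16 ^ d * 3 ^ d * 4 ^ d) * (d.factorial * c0 * p0) * (c ^ d * c ^ d) * F.card * d0 * i := by ring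
    _ ≤ (16 ^ d * 3 ^ d * 4 ^ d) * ((2 * Real.pi * Real.exp 3) ^ d) * (c ^ d * c ^ d) * F.card * d0 * i := by
        gcongr
    _ = _ := by
        have e2 : (192:ℝ) ^ d = 16 ^ d * 3 ^ d * 4 ^ d := by
          rw [← mul_pow, ← mul_pow]; norm_num
        rw [mul_pow _ (Real.exp 3), mul_pow _ (c ^ 2), mul_pow 192, e2, ← pow_mul, mul_comm 2 d, pow_mul]
        ring

/-- The main comparison at scale one. -/
lemma main_cover {d : ℕ} (hd : 1 ≤ d) {c : ℝ} (hc : 1 ≤ c) {C D : Set (Euc d)} (hC : GoodB c C)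
    (hD : GoodB c D) (F0 : Finset (Euc d))
    (hF0 : frontier (polarSet D) ⊆ (F0 : Set (Euc d)) + polarSet C) :
    ∃ F : Finset (Euc d), frontier C ⊆ (F : Set (Euc d)) + D ∧
      (F.card : ℝ) ≤ ((1536 * Real.exp 3 * c ^ 2) * (320 * Real.exp 3 * c)) ^ d * F0.card := by
  have hPC := polar_CB0 hC.1
  have hPD := polar_CB0 hD.1
  have hnt : Nontrivial (Euc d) := by
    have : Nonempty (Fin d) := ⟨⟨0, hd⟩⟩
    infer_instance
  have hex : (1:ℝ) ≤ Real.exp 3 := Real.one_le_exp (by norm_num)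
  set c' : ℝ := 32 * Real.exp 3 * c with hc'
  have hc1' : 1 ≤ c' := by rw [hc']; nlinarith
  have hGD := hD.polar (by linarith)
  -- the ratio `r`
  obtain ⟨p, hp, hmax⟩ := hPC.1.1.exists_isMaxOn ⟨0, hPC.zero_mem⟩
    hPD.gauge_cont.continuousOn
  set g := gauge (polarSet D) p with hg
  have hgpos : 0 < g := by
    obtain ⟨s, hs, hball⟩ := hPC.exists_ball
    obtain ⟨v, hv⟩ := exists_ne (0 : Euc d)
    have hnv : 0 < ‖v‖ := norm_pos_iff.2 hv
    have hq : (s / ‖v‖) • v ∈ polarSet C := hball _ (by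
      rw [norm_smul, Real.norm_of_nonneg (by positivity)]; field_simp; exact le_rfl)
    refine lt_of_lt_of_le ?_ (hmax hq)
    refine (gauge_pos (absorbent_nhds_zero hPD.nhds)
      (NormedSpace.isVonNBounded_of_isBounded ℝ hPD.1.1.isBounded)).2 ?_
    exact smul_ne_zero (by positivity) hv
  set r := g⁻¹ with hr
  have hr0 : 0 < r := inv_pos.2 hgpos
  have hrp : r • p ∈ frontier (polarSet D) := by
    rw [← hPD.gauge_eq_one, gauge_smul_of_nonneg hr0.le, smul_eq_mul, ← hg, hr]
    field_simp
  have hrsub : ∀ x ∈ D, r • x ∈ C := by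
    intro x hx
    rw [← polar_polar hC.1]
    intro y hy
    have h1 : r • y ∈ polarSet D := by
      rw [← hPD.gauge_le_one, gauge_smul_of_nonneg hr0.le, smul_eq_mul, hr, inv_mul_le_one₀ hgpos]
      exact hmax hy
    have h2 := h1 x hx
    rw [inner_smul_right] at h2 ⊢
    rwa [real_inner_comm]
  obtain ⟨F1, hF1, hF1c⟩ := fill hPD hPC (M := 2 * d * c' ^ d) (by positivity) hr0 hp hrp
    (fun x hx => hGD.neg_mem hd hc1' hx) F0 hF0
  have hvol := lemC hc hC hD F1 hF1
  have hD0 := hD.1.inter hD.1.neg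
  have hC0 := hC.1.inter hC.1.neg
  have hfr : Bornology.IsBounded (frontier C) :=
    hC.1.1.1.isBounded.subset hC.1.1.1.isClosed.frontier_subset
  obtain ⟨F, hF, hFc⟩ := packing hfr hD0 (inter_symm D)
  refine ⟨F, hF.trans (add_subset_add_left inter_subset_left), ?_⟩
  have hS := (hC.1.sub hC.1).add (hD.1.sub hD.1)
  have hCS : C ⊆ (C - C) + (D - D) := fun x hx =>
    ⟨x, hC.1.subset_sub hx, 0, (hD.1.sub hD.1).zero_mem, by simp⟩
  have hSn : 0 ≤ volume.real ((C - C) + (D - D)) := measureReal_nonneg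
  have h4d : (1:ℝ) ≤ 4 ^ d := one_le_pow₀ (by norm_num)
  have hA : volume.real (frontier C + (2⁻¹ : ℝ) • (D ∩ -D)) * ((2 + 2 * d * c' ^ d) * r + 1) ≤
      4 ^ d * (3 + 2 * d * c' ^ d) * volume.real ((C - C) + (D - D)) := by
    set M : ℝ := 2 * d * c' ^ d
    have hM0 : 0 ≤ M := by positivity
    rcases le_total r 1 with h | h
    · have hs : frontier C + (2⁻¹ : ℝ) • (D ∩ -D) ⊆ (C - C) + (D - D) := by
        rintro _ ⟨a, ha, _, ⟨z, hz, rfl⟩, rfl⟩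
        refine ⟨a, hC.1.subset_sub (hC.1.1.1.isClosed.frontier_subset ha), (2⁻¹:ℝ) • z, ?_, rfl⟩
        exact hD.1.subset_sub (hD.1.1.2.1.smul_mem_of_zero_mem hD.1.zero_mem hz.1
          ⟨by norm_num, by norm_num⟩)
      have hv := volume_real_mono hS.1.1.isBounded hs
      have h5 : (2 + M) * r + 1 ≤ 3 + M := by nlinarith
      calc _ ≤ volume.real ((C - C) + (D - D)) * (3 + M) :=
            mul_le_mul hv h5 (by positivity) hSn
        _ = 1 * (3 + M) * volume.real ((C - C) + (D - D)) := by ring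
        _ ≤ _ := by gcongr
    · have hε : (2 * r)⁻¹ < 1 := inv_lt_one_of_one_lt₀ (by linarith)
      have hs : frontier C + (2⁻¹ : ℝ) • (D ∩ -D) ⊆ frontier C + ((2 * r)⁻¹ : ℝ) • (C ∩ -C) := by
        refine add_subset_add_left ?_
        rintro _ ⟨z, ⟨hz, hz'⟩, rfl⟩
        refine ⟨r • z, ⟨hrsub z hz, ?_⟩, ?_⟩
        · have := hrsub (-z) hz'
          rw [mem_neg]; simpa using this
        · simp only [smul_smul]
          congr 1
          field_simp
      have hv := volume_real_mono (hfr.add (hC0.1.1.smul _).isBounded) hs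
      have hv2 := hv.trans (shell_volume hC.1 (inv_pos.2 (by positivity)) hε)
      have hv3 := volume_real_mono hS.1.1.isBounded hCS
      have h6 : (2 * r)⁻¹ * ((2 + M) * r + 1) ≤ 3 + M := by
        rw [inv_mul_le_iff₀ (by positivity)]; nlinarith
      calc _ ≤ (4 ^ d * (2 * r)⁻¹ * volume.real C) * ((2 + M) * r + 1) :=
            mul_le_mul_of_nonneg_right hv2 (by positivity)
        _ = 4 ^ d * ((2 * r)⁻¹ * ((2 + M) * r + 1)) * volume.real C := by ring
        _ ≤ _ := by gcongr
  rw [volume_real_smul (by norm_num)] at hFc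
  have hd0 : 0 < volume.real (D ∩ -D) := hD0.1.vol_pos
  set w := volume.real (D ∩ -D)
  set v := volume.real (frontier C + (2⁻¹ : ℝ) • (D ∩ -D))
  set S := volume.real ((C - C) + (D - D))
  have hvn : 0 ≤ v := measureReal_nonneg
  have hMb : 3 + 2 * (d:ℝ) * c' ^ d ≤ (10 * c') ^ d := by
    have h1 : (d:ℝ) ≤ 2 ^ d := by exact_mod_cast Nat.lt_two_pow_self.le
    have h2 : (5:ℝ) ≤ 5 ^ d := by
      calc (5:ℝ) = 5 ^ 1 := by norm_num
        _ ≤ 5 ^ d := pow_le_pow_right₀ (by norm_num) hd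
    have h3 : 1 ≤ c' ^ d := one_le_pow₀ hc1'
    have h4 : (1:ℝ) ≤ d := by exact_mod_cast hd
    have h5 : 1 ≤ (d:ℝ) * c' ^ d := one_le_mul_of_one_le_of_one_le h4 h3
    calc 3 + 2 * (d:ℝ) * c' ^ d ≤ 5 * (d * c' ^ d) := by linarith
      _ ≤ 5 ^ d * (2 ^ d * c' ^ d) := by gcongr
      _ = _ := by rw [← mul_pow, ← mul_pow]; congr 1; ring
  set Q : ℝ := (192 * Real.exp 3 * c ^ 2) ^ d with hQ
  have hQ0 : 0 < Q := by positivity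
  refine le_of_mul_le_mul_right ?_ hd0
  have e2 : (2⁻¹ : ℝ) ^ d * 2 ^ d = 1 := by rw [← mul_pow]; norm_num
  have hR0 : 0 < (2 + 2 * (d:ℝ) * c' ^ d) * r + 1 := by positivity
  refine le_of_mul_le_mul_right ?_ hR0
  set R := (2 + 2 * (d:ℝ) * c' ^ d) * r + 1
  calc (F.card : ℝ) * w * R = 2 ^ d * (F.card * ((2⁻¹) ^ d * w)) * R := by
        linear_combination (-(F.card * w * R : ℝ)) * e2
    _ ≤ 2 ^ d * v * R := by gcongr
    _ = 2 ^ d * (v * R) := by ring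
    _ ≤ 2 ^ d * (4 ^ d * (3 + 2 * d * c' ^ d) * S) := by gcongr
    _ ≤ 2 ^ d * (4 ^ d * (10 * c') ^ d * (Q * (R * F0.card) * w)) := by
        gcongr
        refine hvol.trans ?_
        gcongr
    _ = _ := by
        have e3 : (1536:ℝ) * Real.exp 3 * c ^ 2 = 2 * 4 * (192 * Real.exp 3 * c ^ 2) := by ring
        have e4 : 320 * Real.exp 3 * c = 10 * c' := by rw [hc']; ring
        rw [e3, e4, mul_pow _ (10 * c'), mul_pow (2 * 4), mul_pow 2 4, ← hQ]
        ring

lemma transCov_le {d : ℕ} {D U : Set (Euc d)} {α : ℝ} (F : Finset (Euc d))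
    (h : U ⊆ (F : Set (Euc d)) + α • D) : transCov D U α ≤ F.card := by
  refine Nat.sInf_le ⟨fun i => (F.equivFin.symm i : Euc d), ?_⟩
  intro u hu
  obtain ⟨x, hx, e, he, rfl⟩ := h hu
  refine mem_iUnion.2 ⟨F.equivFin ⟨x, hx⟩, ?_⟩
  simp only [Equiv.symm_apply_apply]
  exact ⟨e, he, rfl⟩

lemma transCov_spec {d : ℕ} {D U : Set (Euc d)} {α : ℝ} (hD : CB0 D) (hα : 0 < α)
    (hU : Bornology.IsBounded U) : ∃ F : Finset (Euc d), F.card ≤ transCov D U α ∧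
      U ⊆ (F : Set (Euc d)) + α • D := by
  classical
  have hD' := hD.smul hα
  obtain ⟨F, hF, -⟩ := packing hU (hD'.inter hD'.neg) (inter_symm _)
  have hF' : U ⊆ (F : Set (Euc d)) + α • D := hF.trans (add_subset_add_left inter_subset_left)
  have hne : {m : ℕ | ∃ x : Fin m → Euc d, U ⊆ ⋃ i, x i +ᵥ α • D}.Nonempty := by
    refine ⟨F.card, fun i => (F.equivFin.symm i : Euc d), ?_⟩
    intro u hu
    obtain ⟨x, hx, e, he, rfl⟩ := hF' hu
    refine mem_iUnion.2 ⟨F.equivFin ⟨x, hx⟩, ?_⟩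
    simp only [Equiv.symm_apply_apply]
    exact ⟨e, he, rfl⟩
  obtain ⟨x, hx⟩ := Nat.sInf_mem hne
  refine ⟨Finset.univ.image x, ?_, ?_⟩
  · refine Finset.card_image_le.trans ?_
    rw [Finset.card_univ, Fintype.card_fin]
    exact le_rfl
  · intro u hu
    obtain ⟨i, e, he, rfl⟩ := mem_iUnion.1 (hx hu)
    exact ⟨x i, by simp, e, he, rfl⟩

lemma frontier_bounded {d : ℕ} {C : Set (Euc d)} (hC : CB0 C) :
    Bornology.IsBounded (frontier C) :=
  hC.1.1.isBounded.subset hC.1.1.isClosed.frontier_subset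

lemma polar_smul {d : ℕ} {D : Set (Euc d)} {α : ℝ} (hα : 0 < α) :
    polarSet (α • D) = α⁻¹ • polarSet D := by
  ext y
  rw [mem_smul_set_iff_inv_smul_mem₀ (inv_ne_zero hα.ne'), inv_inv]
  constructor
  · intro h x hx
    have := h (α • x) ⟨x, hx, rfl⟩
    rw [inner_smul_left] at this
    rw [inner_smul_right]
    simpa using this
  · rintro h _ ⟨x, hx, rfl⟩
    have := h x hx
    rw [inner_smul_right] at this
    simp only [inner_smul_left]
    simpa using this

/-- The comparison at an arbitrary scale. -/
lemma main_scaled {d : ℕ} (hd : 1 ≤ d) {c : ℝ} (hc : 1 ≤ c) {C D : Set (Euc d)} (hC : GoodB c C)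
    (hD : GoodB c D) {α : ℝ} (hα : 0 < α) :
    (transCov D (frontier C) α : ℝ) ≤
      ((1536 * Real.exp 3 * c ^ 2) * (320 * Real.exp 3 * c)) ^ d *
        transCov (polarSet C) (frontier (polarSet D)) α := by
  classical
  have hPC := polar_CB0 hC.1
  have hPD := polar_CB0 hD.1
  obtain ⟨F0, hF0c, hF0⟩ := transCov_spec hPC hα (frontier_bounded hPD)
  have hsc : frontier (polarSet (α • D)) ⊆
      ((F0.image (fun x => α⁻¹ • x) : Finset (Euc d)) : Set (Euc d)) + polarSet C := by
    rw [polar_smul hα]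
    intro y hy
    have hy' : α • y ∈ frontier (polarSet D) := by
      have hE : frontier (α⁻¹ • polarSet D) = α⁻¹ • frontier (polarSet D) := by
        have := (Homeomorph.smulOfNeZero α⁻¹ (inv_ne_zero hα.ne')).image_frontier (polarSet D)
        exact this.symm
      rw [hE, mem_smul_set_iff_inv_smul_mem₀ (inv_ne_zero hα.ne'), inv_inv] at hy
      exact hy
    obtain ⟨x, hx, _, ⟨e, he, rfl⟩, hxe⟩ := hF0 hy'
    refine ⟨α⁻¹ • x, ?_, e, he, ?_⟩
    · rw [Finset.coe_image]; exact ⟨x, hx, rfl⟩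
    · have hxe' : x + α • e = α • y := hxe
      have : α⁻¹ • (x + α • e) = y := by rw [hxe', smul_smul, inv_mul_cancel₀ hα.ne', one_smul]
      rw [← this, smul_add, smul_smul, inv_mul_cancel₀ hα.ne', one_smul]
  obtain ⟨F, hF, hFc⟩ := main_cover hd hc hC (hD.smul hα (by linarith)) _ hsc
  have h1 : (transCov D (frontier C) α : ℝ) ≤ F.card := by exact_mod_cast transCov_le F hF
  have h2 : ((F0.image (fun x => α⁻¹ • x)).card : ℝ) ≤
      transCov (polarSet C) (frontier (polarSet D)) α := by
    exact_mod_cast Finset.card_image_le.trans hF0c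
  refine h1.trans (hFc.trans ?_)
  gcongr

/-- Duality for boundary coverings by translates of centered bodies. -/
theorem mink_boundary_cover_duality :
    ∃ c : ℝ, 1 ≤ c ∧ ∀ d : ℕ, 2 ≤ d →
      ∀ C D : Set (Euc d), IsConvexBody C → IsConvexBody D →
        (∫ x in C, x) = 0 → (∫ x in D, x) = 0 →
        ∀ α : ℝ, 0 < α →
          (c ^ d)⁻¹ * (transCov (polarSet C) (frontier (polarSet D)) α : ℝ) ≤
              (transCov D (frontier C) α : ℝ) ∧
          (transCov D (frontier C) α : ℝ) ≤
              c ^ d * (transCov (polarSet C) (frontier (polarSet D)) α : ℝ) := by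

  have hex : (1:ℝ) ≤ Real.exp 3 := Real.one_le_exp (by norm_num)
  set c0 : ℝ := 256 * Real.exp 3 with hc0
  have hc01 : 1 ≤ c0 := by rw [hc0]; linarith
  set c1 : ℝ := 32 * Real.exp 3 * c0 with hc1
  have hc11 : c0 ≤ c1 := by rw [hc1]; nlinarith
  have h1 : 1 ≤ c1 := hc01.trans hc11
  set κ : ℝ := (1536 * Real.exp 3 * c1 ^ 2) * (320 * Real.exp 3 * c1) with hκ
  have hκ1 : 1 ≤ κ := by
    rw [hκ]
    have h2 : 1 ≤ c1 ^ 2 := one_le_pow₀ h1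
    refine one_le_mul_of_one_le_of_one_le ?_ ?_
    · exact one_le_mul_of_one_le_of_one_le (by linarith) h2
    · exact one_le_mul_of_one_le_of_one_le (by linarith) h1
  refine ⟨κ, hκ1, fun d hd C D hC hD hC0 hD0 α hα => ?_⟩
  have hd1 : 1 ≤ d := by omega
  have gC := GoodB.of_centered hC hC0
  have gD := GoodB.of_centered hD hD0
  have gPC := gC.polar (by linarith)
  have gPD := gD.polar (by linarith)
  have gC' := gC.mono (by linarith) hc11
  have gD' := gD.mono (by linarith) hc11
  refine ⟨?_, main_scaled hd1 h1 gC' gD' hα⟩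
  have h3 := main_scaled hd1 h1 gPD gPC hα
  rw [polar_polar gC.1, polar_polar gD.1] at h3
  rw [inv_mul_le_iff₀ (by positivity)]
  exact h3
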